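/- arXiv:1807.01492 — 4 statements merged into one kernel-verified Lean document; each statement's English description precedes it below -/
import Mathlib

section
/- There exists a constant C > 0 such that for every dimension d ≥ 2 and all natural numbers k, n with k < n/2, the minimal k-dispersion satisfies k-disp*(n,d) ≤ C · max{ log₂(n) · √(log₂(d)/n) , k · log₂(n/k)/n }. -/
open MeasureTheory Finset
open scoped Classical

noncomputable section

/-- The `k`-dispersion of a finite point set `P ⊆ [0,1]^d`: the supremum of the volumes of
axis-parallel boxes inside `[0,1]^d` containing at most `k` points of `P`. -/
def kdisp (d k : ℕ) (P : Finset (Fin d → ℝ)) : ℝ :=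
  sSup { v : ℝ | ∃ a b : Fin d → ℝ,
    (∀ i, 0 ≤ a i ∧ a i ≤ b i ∧ b i ≤ 1) ∧
    (P.filter (fun x => ∀ i, x i ∈ Set.Ioo (a i) (b i))).card ≤ k ∧
    v = ∏ i, (b i - a i) }

/-- The minimal `k`-dispersion over all `n`-point subsets of `[0,1]^d`. -/
def kdispStar (d k n : ℕ) : ℝ :=
  sInf { v : ℝ | ∃ P : Finset (Fin d → ℝ),
    (∀ x ∈ P, ∀ i, x i ∈ Set.Icc (0:ℝ) 1) ∧ P.card = n ∧ v = kdisp d k P }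


theorem aux_prod_sub {ι : Type*} (s : Finset ι) (y : ι → ℝ) (h0 : ∀ i ∈ s, 0 ≤ y i)
    (h1 : ∀ i ∈ s, y i ≤ 1) :
    1 - ∑ i ∈ s, y i ≤ ∏ i ∈ s, (1 - y i) ∧ ∏ i ∈ s, (1 - y i) ≤ 1 := by
  induction s using Finset.induction_on with
  | empty => simp
  | insert a s ha ih =>
    obtain ⟨i1, i2⟩ := ih (fun i hi => h0 i (Finset.mem_insert_of_mem hi))
      (fun i hi => h1 i (Finset.mem_insert_of_mem hi))
    have ha0 := h0 a (Finset.mem_insert_self _ _)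
    have ha1 := h1 a (Finset.mem_insert_self _ _)
    have hp : 0 ≤ ∏ i ∈ s, (1 - y i) := Finset.prod_nonneg (fun i hi => by
      have := h1 i (Finset.mem_insert_of_mem hi); linarith)
    rw [Finset.sum_insert ha, Finset.prod_insert ha]
    constructor <;> nlinarith

theorem aux_prod_add {ι : Type*} (s : Finset ι) (y : ι → ℝ) (h0 : ∀ i ∈ s, 0 ≤ y i) :
    1 + ∑ i ∈ s, y i ≤ ∏ i ∈ s, (1 + y i) := by
  induction s using Finset.induction_on with
  | empty => simp
  | insert a s ha ih =>
    have i1 := ih (fun i hi => h0 i (Finset.mem_insert_of_mem hi))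
    have ha0 := h0 a (Finset.mem_insert_self _ _)
    have hp : 0 ≤ ∑ i ∈ s, y i := Finset.sum_nonneg (fun i hi =>
      h0 i (Finset.mem_insert_of_mem hi))
    rw [Finset.sum_insert ha, Finset.prod_insert ha]
    nlinarith

/-- Loss of discretization is at most a factor `2`. -/
theorem aux_prod_loss {d : ℕ} (l : Fin d → ℝ) (r m : ℝ) (hr : 0 < r) (hm : 4 ≤ r * m)
    (hl0 : ∀ i, 0 < l i) (hl1 : ∀ i, l i ≤ 1) (hl : r ≤ ∏ i, l i) (c : Fin d → ℝ)
    (hc : ∀ i, (m + 2) * l i - 2 ≤ c i) : r / 2 * m ^ d ≤ ∏ i, c i := by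
  have hm0 : 0 < m := by
    by_contra h
    nlinarith
  set y : Fin d → ℝ := fun i => 2 / m * ((l i)⁻¹ - 1) with hy
  have hinv : ∀ i, 0 ≤ (l i)⁻¹ - 1 := fun i => by
    have := (one_le_inv₀ (hl0 i)).2 (hl1 i)
    linarith
  have hy0 : ∀ i, 0 ≤ y i := fun i => mul_nonneg (by positivity) (hinv i)
  have hsum : ∑ i, ((l i)⁻¹ - 1) ≤ 1 / r := by
    have h := aux_prod_add Finset.univ (fun i => (l i)⁻¹ - 1) (fun i _ => hinv i)
    have h2 : ∏ i, (1 + ((l i)⁻¹ - 1)) = (∏ i, l i)⁻¹ := by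
      rw [← Finset.prod_inv_distrib]
      exact Finset.prod_congr rfl (fun i _ => by ring)
    rw [h2] at h
    have h3 : (∏ i, l i)⁻¹ ≤ 1 / r := by
      rw [one_div]; exact inv_anti₀ hr hl
    linarith
  have hys : ∑ i, y i ≤ 1 / 2 := by
    rw [hy, ← Finset.mul_sum]
    calc 2 / m * ∑ i, ((l i)⁻¹ - 1) ≤ 2 / m * (1 / r) := by gcongr
      _ = 2 / (r * m) := by field_simp
      _ ≤ 2 / 4 := by gcongr
      _ = 1 / 2 := by norm_num
  have hy1 : ∀ i, y i ≤ 1 := fun i => by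
    have := Finset.single_le_sum (fun j _ => hy0 j) (Finset.mem_univ i)
    linarith
  have hp := (aux_prod_sub Finset.univ y (fun i _ => hy0 i) (fun i _ => hy1 i)).1
  have hci : ∀ i, m * (l i * (1 - y i)) ≤ c i := fun i => by
    refine le_trans (le_of_eq ?_) (hc i)
    have := (hl0 i).ne'
    simp only [hy]
    field_simp
    ring
  calc r / 2 * m ^ d ≤ ((∏ i, l i) * ∏ i, (1 - y i)) * m ^ d := by
        gcongr
        nlinarith
    _ = ∏ i, m * (l i * (1 - y i)) := by
        rw [Finset.prod_mul_distrib, Finset.prod_mul_distrib]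
        simp
        ring
    _ ≤ ∏ i, c i := by
        apply Finset.prod_le_prod
        · intro i _
          have := hy1 i
          have := hl0 i
          exact mul_nonneg hm0.le (mul_nonneg (hl0 i).le (by linarith))
        · intro i _; exact hci i

/-- Cells inside an interval. -/
theorem aux_interval (a b : ℝ) (M : ℕ) (ha : 0 ≤ a) (hab : a ≤ b) (hb : b ≤ 1) :
    ∃ lo hi : Fin (M + 1),
      (∀ c : ℕ, (lo : ℕ) ≤ c → c < (hi : ℕ) → ∀ t : ℝ, 0 < t → t < 1 →
        ((c : ℝ) + 1 + t) / (M + 2) ∈ Set.Ioo a b) ∧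
      ((M : ℝ) + 2) * (b - a) - 2 ≤ ((hi - lo : ℕ) : ℝ) ∧
      (1 - 1 / ((M : ℝ) + 2) < b - a → (lo : ℕ) = 0 ∧ (hi : ℕ) = M) := by
  have hW : (0 : ℝ) < (M : ℝ) + 2 := by positivity
  set a' := a * ((M : ℝ) + 2) with ha'
  set b' := b * ((M : ℝ) + 2) with hb'
  have ha0 : 0 ≤ a' := by positivity
  have hb0 : 0 ≤ b' := by have : 0 ≤ b := ha.trans hab
                          positivity
  have hbW : b' ≤ (M : ℝ) + 2 := by nlinarith
  have h1 := Nat.le_ceil a'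
  have h2 := Nat.ceil_lt_add_one ha0
  have h3 := Nat.floor_le hb0
  have h4 := Nat.lt_floor_add_one b'
  set u := ⌈a'⌉₊
  set v := ⌊b'⌋₊
  have hvM : v ≤ M + 2 := by
    have : (v : ℝ) ≤ ((M + 2 : ℕ) : ℝ) := by push_cast; linarith
    exact_mod_cast this
  refine ⟨⟨min (u - 1) M, by omega⟩, ⟨min (v - 1) M, by omega⟩, ?_, ?_, ?_⟩
  · intro c hc1 hc2 t ht0 ht1
    simp only at hc1 hc2
    have k2 : c + 2 ≤ v := by omega
    have k1 : u ≤ c + 1 := by omega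
    have k1' : (u : ℝ) ≤ c + 1 := by exact_mod_cast k1
    have k2' : (c : ℝ) + 2 ≤ v := by exact_mod_cast k2
    constructor
    · rw [lt_div_iff₀ hW]; linarith
    · rw [div_lt_iff₀ hW]; linarith
  · have e : ((M : ℝ) + 2) * (b - a) = b' - a' := by rw [ha', hb']; ring
    rw [e]
    simp only
    set w := min (v - 1) M - min (u - 1) M with hw
    by_cases hu : u ≤ 1
    · by_cases hv : v ≤ M + 1
      · have : v ≤ w + 1 := by omega
        have : (v : ℝ) ≤ w + 1 := by exact_mod_cast this
        linarith
      · have : M = w := by omega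
        have : (M : ℝ) = w := by exact_mod_cast this
        linarith
    · by_cases hv : v ≤ M + 1
      · have : v ≤ w + u := by omega
        have : (v : ℝ) ≤ w + u := by exact_mod_cast this
        linarith
      · have : M + 1 ≤ w + u := by omega
        have : (M : ℝ) + 1 ≤ w + u := by exact_mod_cast this
        linarith
  · intro h
    have e : ((M : ℝ) + 2) * (b - a) = b' - a' := by rw [ha', hb']; ring
    have h5 : ((M : ℝ) + 2) * (1 - 1 / ((M : ℝ) + 2)) < b' - a' := by
      rw [← e]; gcongr
    have h6 : ((M : ℝ) + 2) * (1 - 1 / ((M : ℝ) + 2)) = M + 1 := by field_simp; ring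
    rw [h6] at h5
    have hu : u < 2 := by
      have : (u : ℝ) < (2 : ℕ) := by push_cast; linarith
      exact_mod_cast this
    have hv : M < v := by
      have : ((M : ℕ) : ℝ) < v := by linarith
      exact_mod_cast this
    constructor <;> simp only <;> omega

/-- Probabilistic method: union bound with an exponential moment. -/
theorem aux_union {κ G : Type*} [Fintype κ] [Fintype G] [Nonempty G] (T : κ → Finset G)
    (n k : ℕ) (p : ℝ)
    (h : (Fintype.card κ : ℝ) * 2 ^ k * Real.exp (-(n * p / 2)) < 1) :
    ∃ f : Fin n → G, ∀ s, p * Fintype.card G ≤ ((T s).card : ℝ) →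
      k < (Finset.univ.filter (fun i => f i ∈ T s)).card := by
  by_contra hcon
  push Not at hcon
  set N : ℝ := ((Fintype.card G : ℕ) : ℝ) with hN
  have hN0 : 0 < N := by rw [hN]; exact_mod_cast Fintype.card_pos
  set w : κ → G → ℝ := fun s g => if g ∈ T s then 1 / 2 else 1 with hw
  set F : Finset κ := Finset.univ.filter (fun s => p * N ≤ ((T s).card : ℝ)) with hF
  have hw0 : ∀ s g, 0 < w s g := fun s g => by simp only [hw]; split_ifs <;> norm_num
  have hprod : ∀ (s : κ) (f : Fin n → G),
      ∏ i, w s (f i) = (1 / 2) ^ (Finset.univ.filter (fun i => f i ∈ T s)).card := by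
    intro s f
    simp only [hw]
    rw [Finset.prod_ite]
    simp
  have hsumw : ∀ s ∈ F, (∑ g, w s g) ≤ N * Real.exp (-(p / 2)) := by
    intro s hs
    have hs' : p * N ≤ ((T s).card : ℝ) := by simpa [hF] using hs
    have e : ∑ g, w s g = N - (T s).card / 2 := by
      have : ∀ g, w s g = 1 - (if g ∈ T s then 1 / 2 else 0) := fun g => by
        simp only [hw]; split_ifs <;> norm_num
      simp_rw [this]
      rw [Finset.sum_sub_distrib, Finset.sum_ite_mem]
      simp [hN]
      ring
    have := Real.one_sub_le_exp_neg (p / 2)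
    rw [e]
    nlinarith
  have hs2 : ∀ s ∈ F, ∑ f : Fin n → G, ∏ i, w s (f i) ≤ N ^ n * Real.exp (-(n * p / 2)) := by
    intro s hs
    have e := Finset.prod_univ_sum (fun _ : Fin n => (Finset.univ : Finset G)) (fun _ g => w s g)
    simp only [Finset.prod_const, Finset.card_univ, Fintype.card_fin, Fintype.piFinset_univ] at e
    rw [← e]
    calc (∑ g, w s g) ^ n ≤ (N * Real.exp (-(p / 2))) ^ n := by
          apply pow_le_pow_left₀ (Finset.sum_nonneg (fun g _ => (hw0 s g).le)) (hsumw s hs)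
      _ = _ := by
          rw [mul_pow, ← Real.exp_nat_mul]; congr 2; ring
  have hlow : ∀ f : Fin n → G, 1 ≤ ∑ s ∈ F, 2 ^ k * ∏ i, w s (f i) := by
    intro f
    obtain ⟨s, hs, hk⟩ := hcon f
    have hsF : s ∈ F := by simp only [hF, Finset.mem_filter, Finset.mem_univ, true_and]; exact hs
    have h1 : (1 : ℝ) ≤ 2 ^ k * ∏ i, w s (f i) := by
      rw [hprod]
      calc (1 : ℝ) = 2 ^ k * (1 / 2) ^ k := by rw [← mul_pow]; norm_num
        _ ≤ _ := by
          apply mul_le_mul_of_nonneg_left _ (by positivity)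
          exact pow_le_pow_of_le_one (by norm_num) (by norm_num) hk
    refine h1.trans (Finset.single_le_sum (f := fun s => 2 ^ k * ∏ i, w s (f i)) ?_ hsF)
    intro s _
    exact mul_nonneg (by positivity) (Finset.prod_nonneg (fun i _ => (hw0 s _).le))
  have htot : N ^ n ≤ (Fintype.card κ : ℝ) * (2 ^ k * (N ^ n * Real.exp (-(n * p / 2)))) := by
    calc N ^ n = ∑ f : Fin n → G, (1 : ℝ) := by simp [hN]
      _ ≤ ∑ f : Fin n → G, ∑ s ∈ F, 2 ^ k * ∏ i, w s (f i) :=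
          Finset.sum_le_sum (fun f _ => hlow f)
      _ = ∑ s ∈ F, 2 ^ k * ∑ f : Fin n → G, ∏ i, w s (f i) := by
          rw [Finset.sum_comm]; simp_rw [Finset.mul_sum]
      _ ≤ ∑ s ∈ F, 2 ^ k * (N ^ n * Real.exp (-(n * p / 2))) := by
          apply Finset.sum_le_sum
          intro s hs
          exact mul_le_mul_of_nonneg_left (hs2 s hs) (by positivity)
      _ = (F.card : ℝ) * (2 ^ k * (N ^ n * Real.exp (-(n * p / 2)))) := by simp
      _ ≤ _ := by
          apply mul_le_mul_of_nonneg_right _ (by positivity)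
          exact_mod_cast Finset.card_le_univ F
  have hNn : 0 < N ^ n := by positivity
  nlinarith

theorem aux_enum {d : ℕ} (hd : 0 < d) (S : Finset (Fin d)) (A : ℕ) (h : S.card ≤ A) :
    ∃ e : Fin A → Fin d, ∀ j ∈ S, ∃ a, e a = j := by
  refine ⟨fun a => if h : (a : ℕ) < S.card then (S.equivFin.symm ⟨a, h⟩ : Fin d) else ⟨0, hd⟩, ?_⟩
  intro j hj
  refine ⟨⟨S.equivFin ⟨j, hj⟩, lt_of_lt_of_le (S.equivFin ⟨j, hj⟩).2 h⟩, ?_⟩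
  simp

theorem aux_core (d k n M A : ℕ) (r : ℝ) (hd : 0 < d) (hr : 0 < r)
    (hM : 4 ≤ r * M) (hA : ((M : ℝ) + 2) * Real.log (1 / r) ≤ A)
    (h : ((d : ℝ) * (M + 1) ^ 2) ^ A * 2 ^ k * Real.exp (-(n * r / 4)) < 1) :
    ∃ P : Finset (Fin d → ℝ), (∀ x ∈ P, ∀ i, x i ∈ Set.Icc (0:ℝ) 1) ∧ P.card = n ∧
      kdisp d k P ≤ r := by
  have hM0 : 0 < M := by
    rcases Nat.eq_zero_or_pos M with h0 | h0
    · subst h0; norm_num at hM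
    · exact h0
  have : NeZero M := ⟨hM0.ne'⟩
  let κ := Fin A → Fin d × Fin (M + 1) × Fin (M + 1)
  let T : κ → Finset (Fin d → Fin M) := fun s => Finset.univ.filter
    (fun c => ∀ a, ((s a).2.1 : ℕ) ≤ c (s a).1 ∧ (c (s a).1 : ℕ) < (s a).2.2)
  have hκ : (Fintype.card κ : ℝ) = ((d : ℝ) * (M + 1) ^ 2) ^ A := by
    simp [κ]; ring
  obtain ⟨f, hf⟩ := aux_union T n k (r / 2) (by
    rw [hκ]; convert h using 4; ring)
  let t : Fin n → ℝ := fun i => ((i : ℝ) + 1) / (n + 1)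
  have ht0 : ∀ i, 0 < t i := fun i => by positivity
  have ht1 : ∀ i, t i < 1 := fun i => by
    have : ((i : ℕ) : ℝ) < n := by exact_mod_cast i.2
    simp only [t]
    rw [div_lt_one (by positivity)]; linarith
  have htinj : Function.Injective t := by
    intro i j hij
    simp only [t] at hij
    have hn : (n : ℝ) + 1 ≠ 0 := by positivity
    field_simp at hij
    have : ((i : ℕ) : ℝ) = (j : ℕ) := by linarith
    exact Fin.ext (by exact_mod_cast this)
  let x : Fin n → Fin d → ℝ := fun i j => (((f i j : ℕ) : ℝ) + 1 + t i) / ((M : ℝ) + 2)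
  have hW : (0 : ℝ) < (M : ℝ) + 2 := by positivity
  have hxinj : Function.Injective x := by
    intro i j hij
    have h0 := congrFun hij ⟨0, hd⟩
    simp only [x] at h0
    field_simp at h0
    apply htinj
    have q1 := ht0 i
    have q2 := ht0 j
    have q3 := ht1 i
    have q4 := ht1 j
    set p := (f i ⟨0, hd⟩ : ℕ)
    set q := (f j ⟨0, hd⟩ : ℕ)
    have e1 : p < q + 1 := by
      have : (p : ℝ) < ((q + 1 : ℕ) : ℝ) := by push_cast; linarith
      exact_mod_cast this
    have e2 : q < p + 1 := by
      have : (q : ℝ) < ((p + 1 : ℕ) : ℝ) := by push_cast; linarith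
      exact_mod_cast this
    have e3 : p = q := by omega
    rw [e3] at h0
    linarith
  refine ⟨Finset.univ.image x, ?_, ?_, ?_⟩
  · intro y hy i
    simp only [Finset.mem_image, Finset.mem_univ, true_and] at hy
    obtain ⟨j, rfl⟩ := hy
    have q1 := ht0 j
    have q2 := ht1 j
    have q3 : ((f j i : ℕ) : ℝ) + 1 ≤ M := by exact_mod_cast (f j i).2
    constructor
    · simp only [x]; positivity
    · simp only [x]; rw [div_le_one hW]; linarith
  · rw [Finset.card_image_of_injective _ hxinj]; simp
  · apply Real.sSup_le _ hr.le
    rintro v ⟨a, b, hab, hcard, rfl⟩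
    by_contra hv
    push Not at hv
    refine absurd hcard (not_le.2 ?_)
    have hI := fun j => aux_interval (a j) (b j) M (hab j).1 (hab j).2.1 (hab j).2.2
    choose lo hi h1 h2 h3 using hI
    set l : Fin d → ℝ := fun j => b j - a j with hl
    have hl0' : ∀ j, 0 ≤ l j := fun j => by have := (hab j).2.1; simp only [hl]; linarith
    have hl1 : ∀ j, l j ≤ 1 := fun j => by
      have := (hab j).1; have := (hab j).2.2; simp only [hl]; linarith
    have hl0 : ∀ j, 0 < l j := fun j => by
      rcases (hl0' j).eq_or_lt with h0 | h0
      · have : ∏ i, l i = 0 := Finset.prod_eq_zero (Finset.mem_univ j) h0.symm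
        simp only [hl] at this
        linarith
      · exact h0
    -- the short coordinates
    let S : Finset (Fin d) := Finset.univ.filter (fun j => l j ≤ 1 - 1 / ((M : ℝ) + 2))
    have hS : S.card ≤ A := by
      have hx : r ≤ Real.exp (-(S.card / ((M : ℝ) + 2))) := by
        calc r ≤ ∏ j, l j := hv.le
          _ ≤ ∏ j, (if j ∈ S then Real.exp (-(1 / ((M : ℝ) + 2))) else 1) := by
              apply Finset.prod_le_prod (fun j _ => hl0' j)
              intro j _
              split_ifs with hj
              · have : l j ≤ 1 - 1 / ((M : ℝ) + 2) := by simpa [S] using hj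
                exact this.trans (Real.one_sub_le_exp_neg _)
              · exact hl1 j
          _ = Real.exp (-(1 / ((M : ℝ) + 2))) ^ S.card := by
              rw [Finset.prod_ite_mem]; simp
          _ = _ := by rw [← Real.exp_nat_mul]; congr 1; ring
      have hx2 := Real.log_le_log hr hx
      rw [Real.log_exp] at hx2
      have : (S.card : ℝ) / ((M : ℝ) + 2) ≤ Real.log (1 / r) := by
        rw [one_div, Real.log_inv]; linarith
      rw [div_le_iff₀ hW] at this
      have : (S.card : ℝ) ≤ A := by linarith
      exact_mod_cast this
    obtain ⟨e, he⟩ := aux_enum hd S A hS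
    let s : κ := fun a => (e a, lo (e a), hi (e a))
    have hT : T s = Fintype.piFinset (fun j => Finset.univ.filter
        (fun c : Fin M => (lo j : ℕ) ≤ c ∧ (c : ℕ) < hi j)) := by
      ext c
      simp only [T, s, Finset.mem_filter, Finset.mem_univ, true_and, Fintype.mem_piFinset]
      constructor
      · intro hc j
        by_cases hj : j ∈ S
        · obtain ⟨a, rfl⟩ := he j hj
          exact hc a
        · have : 1 - 1 / ((M : ℝ) + 2) < b j - a j := by
            simpa [S] using hj
          obtain ⟨g1, g2⟩ := h3 j this
          rw [g1, g2]
          exact ⟨Nat.zero_le _, (c j).2⟩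
      · intro hc a
        exact hc (e a)
    have hcount : ∀ j, (Finset.univ.filter
        (fun c : Fin M => (lo j : ℕ) ≤ c ∧ (c : ℕ) < hi j)).card = (hi j - lo j : ℕ) := by
      intro j
      rw [← Nat.card_Ico, ← Finset.card_map Fin.valEmbedding]
      congr 1
      ext c
      simp only [Finset.mem_map, Finset.mem_filter, Finset.mem_univ, true_and,
        Fin.valEmbedding_apply, Finset.mem_Ico]
      constructor
      · rintro ⟨c', hc', rfl⟩; exact hc'
      · intro hc
        have := (hi j).2
        exact ⟨⟨c, by omega⟩, hc, rfl⟩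
    have hTc : r / 2 * Fintype.card (Fin d → Fin M) ≤ ((T s).card : ℝ) := by
      rw [hT, Fintype.card_piFinset]
      push_cast
      simp_rw [hcount]
      have := aux_prod_loss l r M hr hM hl0 hl1 hv.le (fun j => ((hi j - lo j : ℕ) : ℝ)) h2
      simpa using this
    have hk := hf s hTc
    refine lt_of_lt_of_le hk ?_
    rw [← Finset.card_image_of_injective _ hxinj]
    apply Finset.card_le_card
    intro y hy
    simp only [Finset.mem_image, Finset.mem_filter, Finset.mem_univ, true_and] at hy ⊢
    obtain ⟨i, hi', rfl⟩ := hy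
    refine ⟨⟨i, rfl⟩, ?_⟩
    intro j
    rw [hT, Fintype.mem_piFinset] at hi'
    have hj := hi' j
    simp only [Finset.mem_filter, Finset.mem_univ, true_and] at hj
    exact h1 j _ hj.1 hj.2 (t i) (ht0 i) (ht1 i)

theorem aux_kdisp_nonneg (d k : ℕ) (P : Finset (Fin d → ℝ)) : 0 ≤ kdisp d k P := by
  apply Real.sSup_nonneg
  rintro v ⟨a, b, hab, -, rfl⟩
  exact Finset.prod_nonneg (fun i _ => by have := (hab i).2.1; linarith)

theorem aux_kdisp_le_one (d k : ℕ) (P : Finset (Fin d → ℝ)) : kdisp d k P ≤ 1 := by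
  apply Real.sSup_le _ zero_le_one
  rintro v ⟨a, b, hab, -, rfl⟩
  apply Finset.prod_le_one
  · intro i _; have := (hab i).2.1; linarith
  · intro i _
    have h1 := (hab i).1
    have h2 := (hab i).2.2
    linarith

theorem aux_star_le (d k n : ℕ) (P : Finset (Fin d → ℝ))
    (hP : ∀ x ∈ P, ∀ i, x i ∈ Set.Icc (0:ℝ) 1) (hn : P.card = n) :
    kdispStar d k n ≤ kdisp d k P := by
  apply csInf_le
  · refine ⟨0, ?_⟩
    rintro v ⟨P, -, -, rfl⟩
    exact aux_kdisp_nonneg d k P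
  · exact ⟨P, hP, hn, rfl⟩

theorem aux_star_le_one (d k n : ℕ) : kdispStar d k n ≤ 1 := by
  by_cases h : ∃ P : Finset (Fin d → ℝ), (∀ x ∈ P, ∀ i, x i ∈ Set.Icc (0:ℝ) 1) ∧ P.card = n
  · obtain ⟨P, h1, h2⟩ := h
    exact (aux_star_le d k n P h1 h2).trans (aux_kdisp_le_one d k P)
  · have : { v : ℝ | ∃ P : Finset (Fin d → ℝ),
      (∀ x ∈ P, ∀ i, x i ∈ Set.Icc (0:ℝ) 1) ∧ P.card = n ∧ v = kdisp d k P } = ∅ := by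
      ext v
      simp only [Set.mem_ofPred_eq, Set.mem_empty_iff_false, iff_false]
      rintro ⟨P, h1, h2, -⟩
      exact h ⟨P, h1, h2⟩
    rw [kdispStar, this, Real.sInf_empty]
    norm_num

theorem aux_log_le_logb (x : ℝ) (hx : 1 ≤ x) : Real.log x ≤ Real.logb 2 x := by
  have h0 := Real.log_nonneg hx
  have h2 : Real.log 2 ≤ 1 := by have := Real.log_two_lt_d9; linarith
  have h3 : 0 < Real.log 2 := Real.log_pos (by norm_num)
  rw [Real.logb, le_div_iff₀ h3]
  nlinarith

theorem aux_one_le_logb (x : ℝ) (hx : 2 ≤ x) : 1 ≤ Real.logb 2 x := by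
  rw [Real.le_logb_iff_rpow_le (by norm_num) (by linarith)]
  simpa using hx

set_option maxHeartbeats 2000000

/-- **Theorem A.** There exists a constant `C > 0` such that for any `d ≥ 2` and all
`k, n ∈ ℕ` with `k < n/2`,
`k-disp*(n,d) ≤ C · max{ log₂(n) · √(log₂(d)/n), k · log₂(n/k)/n }`. -/
theorem statement_0 :
    ∃ C : ℝ, 0 < C ∧ ∀ d k n : ℕ, 2 ≤ d → 1 ≤ k → 2 * k < n →
      kdispStar d k n ≤
        C * max (Real.logb 2 n * Real.sqrt (Real.logb 2 d / n))
          ((k : ℝ) * Real.logb 2 ((n : ℝ) / (k : ℝ)) / n) := by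
  refine ⟨16, by norm_num, ?_⟩
  intro d k n hd hk hkn
  set L := Real.logb 2 n with hL
  set D := Real.logb 2 d with hD
  set r := 16 * max (L * Real.sqrt (D / n)) ((k : ℝ) * Real.logb 2 ((n : ℝ) / (k : ℝ)) / n)
    with hr
  rcases le_or_gt 1 r with hr1 | hr1
  · exact (aux_star_le_one d k n).trans hr1
  have hkR : (1 : ℝ) ≤ k := by exact_mod_cast hk
  have hdR : (2 : ℝ) ≤ d := by exact_mod_cast hd
  have hknR : 2 * (k : ℝ) < n := by exact_mod_cast hkn
  have hn0 : (0 : ℝ) < n := by linarith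
  have hL1 : 1 ≤ L := aux_one_le_logb _ (by linarith)
  have hD1 : 1 ≤ D := aux_one_le_logb _ hdR
  have hlogn : Real.log n ≤ L := aux_log_le_logb _ (by linarith)
  have hlogd : Real.log d ≤ D := aux_log_le_logb _ (by linarith)
  have hra : 16 * (L * Real.sqrt (D / n)) ≤ r := by
    rw [hr]; gcongr; exact le_max_left _ _
  have hrb : 16 * ((k : ℝ) * Real.logb 2 ((n : ℝ) / (k : ℝ)) / n) ≤ r := by
    rw [hr]; gcongr; exact le_max_right _ _
  have hsq : 256 * L ^ 2 * D ≤ r ^ 2 * n := by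
    have h1 : (16 * (L * Real.sqrt (D / n))) ^ 2 ≤ r ^ 2 := by gcongr
    have h2 : (16 * (L * Real.sqrt (D / n))) ^ 2 = 256 * L ^ 2 * D / n := by
      rw [mul_pow, mul_pow, Real.sq_sqrt (by positivity)]; ring
    rw [h2, div_le_iff₀ hn0] at h1
    exact h1
  have hr0 : 0 < r := by
    refine lt_of_lt_of_le ?_ hra
    have : 0 < Real.sqrt (D / n) := Real.sqrt_pos.2 (by positivity)
    positivity
  have hkr : 16 * (k : ℝ) ≤ r * n := by
    have h1 : 1 ≤ Real.logb 2 ((n : ℝ) / k) := aux_one_le_logb _ (by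
      rw [le_div_iff₀ (by linarith)]; linarith)
    have h2 : 16 * ((k : ℝ) * Real.logb 2 ((n : ℝ) / (k : ℝ)) / n) * n ≤ r * n := by gcongr
    have h3 : 16 * ((k : ℝ) * Real.logb 2 ((n : ℝ) / (k : ℝ)) / n) * n
      = 16 * ((k : ℝ) * Real.logb 2 ((n : ℝ) / (k : ℝ))) := by field_simp
    nlinarith
  have hr2n : 256 ≤ r ^ 2 * n := by
    have : 1 ≤ L ^ 2 * D := by nlinarith
    linarith
  set M := ⌈4 / r⌉₊ with hMdef
  have hM1 : 4 / r ≤ M := Nat.le_ceil _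
  have hM2 : (M : ℝ) < 4 / r + 1 := Nat.ceil_lt_add_one (by positivity)
  have hrM1 : 4 ≤ r * M := by rw [div_le_iff₀ hr0] at hM1; linarith
  have hrM2 : r * M < 5 := by
    have : r * M < r * (4 / r + 1) := by gcongr
    have e : r * (4 / r + 1) = 4 + r := by field_simp
    linarith
  have hlogr0 : 0 ≤ Real.log (1 / r) := Real.log_nonneg (by
    rw [le_div_iff₀ hr0]; linarith)
  have hlogr : Real.log (1 / r) ≤ L := by
    refine le_trans (Real.log_le_log (by positivity) ?_) hlogn
    rw [div_le_iff₀ hr0]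
    nlinarith
  set A := ⌈((M : ℝ) + 2) * L⌉₊ with hAdef
  have hA1 : ((M : ℝ) + 2) * L ≤ A := Nat.le_ceil _
  have hA2 : (A : ℝ) < ((M : ℝ) + 2) * L + 1 := Nat.ceil_lt_add_one (by positivity)
  have hrA : r * A ≤ 8 * L := by nlinarith
  have hM3 : ((M : ℝ) + 1) ^ 2 ≤ n := by
    have h1 : r * ((M : ℝ) + 1) ≤ 6 := by nlinarith
    have h2 : (r * ((M : ℝ) + 1)) ^ 2 ≤ 6 ^ 2 := by gcongr
    have h3 : r ^ 2 * ((M : ℝ) + 1) ^ 2 ≤ r ^ 2 * n := by nlinarith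
    exact le_of_mul_le_mul_left h3 (by positivity)
  obtain ⟨P, hP1, hP2, hP3⟩ := aux_core d k n M A r (by omega) hr0 hrM1
    (le_trans (by gcongr) hA1) (by
      have hbase : (d : ℝ) * ((M : ℝ) + 1) ^ 2 ≤ Real.exp (2 * D * L) := by
        calc (d : ℝ) * ((M : ℝ) + 1) ^ 2 ≤ d * n := by gcongr
          _ = Real.exp (Real.log d + Real.log n) := by
              rw [Real.exp_add, Real.exp_log (by linarith), Real.exp_log hn0]
          _ ≤ _ := by
              apply Real.exp_le_exp.2
              nlinarith
      have h2 : (2 : ℝ) ≤ Real.exp 1 := by have := Real.exp_one_gt_d9; linarith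
      have hAk : A * (2 * D * L) + k < n * r / 4 := by
        have q1 : r * (A * (2 * D * L)) ≤ r * (n * r / 16) := by
          have : (r * A) * (2 * D * L) ≤ (8 * L) * (2 * D * L) :=
            mul_le_mul_of_nonneg_right hrA (by positivity)
          linear_combination this + hsq / 16
        have q2 := le_of_mul_le_mul_left q1 hr0
        have q3 : 0 < r * n := mul_pos hr0 hn0
        linarith
      calc ((d : ℝ) * (M + 1) ^ 2) ^ A * 2 ^ k * Real.exp (-(n * r / 4))
          ≤ (Real.exp (2 * D * L)) ^ A * (Real.exp 1) ^ k * Real.exp (-(n * r / 4)) := by gcongr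
        _ = Real.exp (A * (2 * D * L) + k - n * r / 4) := by
            rw [← Real.exp_nat_mul, ← Real.exp_nat_mul, ← Real.exp_add, ← Real.exp_add]
            congr 1; ring
        _ < 1 := by rw [Real.exp_lt_one_iff]; linarith)
  exact (aux_star_le d k n P hP1 hP2).trans hP3
end
end

section
/- Let m ∈ ℕ and let 𝕏 = {x¹,…,xⁿ} be a random multiset of n points sampled independently and uniformly from 𝕄_m^d. For every k ∈ ℕ with 1 ≤ k < n/2, ℙ( there exists a box B ∈ Ω_m with #(𝕏 ∩ B) ≤ k ) < (2 n^k / (k−1)!) · exp( m · 2^m · log(2^{m+3} d) − n · 2^{−m−4} ). -/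
open MeasureTheory Finset
open scoped Classical

noncomputable section

/-- The one-dimensional mesh `𝕄_m = {1/2^m, 2/2^m, …, (2^m-1)/2^m}`. -/
def Mgrid (m : ℕ) : Finset ℝ := (Finset.Icc 1 (2 ^ m - 1)).image fun j : ℕ => (j : ℝ) / 2 ^ m

/-- The mesh `𝕄_m^d`. -/
def Ggrid (m d : ℕ) : Finset (Fin d → ℝ) := Fintype.piFinset fun _ => Mgrid m

/-- `I` is a subinterval of `[0,1]`. -/
def IsIntervalIn01 (I : Set ℝ) : Prop := I ⊆ Set.Icc 0 1 ∧ I.OrdConnected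

/-- Membership of the axis-parallel box `∏_ℓ I ℓ` in the family `Ω_m(s,p)`: the box has
volume exceeding `2^{-m}`, and for every coordinate `ℓ` one has
`s ℓ / 2^m < vol(I ℓ) ≤ (s ℓ + 1)/2^m` and `inf (I ℓ) ∈ [p ℓ - 2^{-m}, p ℓ)`. -/
def memOmega (m : ℕ) {d : ℕ} (s : Fin d → ℕ) (p : Fin d → ℝ) (I : Fin d → Set ℝ) : Prop :=
  (∀ ℓ, IsIntervalIn01 (I ℓ)) ∧
  ((2:ℝ) ^ m)⁻¹ < (volume (Set.pi Set.univ I)).toReal ∧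
  ∀ ℓ, (s ℓ : ℝ) / 2 ^ m < (volume (I ℓ)).toReal ∧
    (volume (I ℓ)).toReal ≤ ((s ℓ : ℝ) + 1) / 2 ^ m ∧
    sInf (I ℓ) ∈ Set.Ico (p ℓ - ((2:ℝ) ^ m)⁻¹) (p ℓ)

/-- `(s,p)` is an admissible index pair, i.e. `(s,p) ∈ 𝕀_m`: the parameters lie in the
allowed ranges and `Ω_m(s,p) ≠ ∅`. -/
def memIm (m : ℕ) {d : ℕ} (s : Fin d → ℕ) (p : Fin d → ℝ) : Prop :=
  (∀ ℓ, s ℓ < 2 ^ m) ∧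
  (∀ ℓ, ∃ j : ℕ, 1 ≤ j ∧ j ≤ 2 ^ m - 1 ∧ p ℓ = (j : ℝ) / 2 ^ m) ∧
  ∃ I, memOmega m s p I

/-- Membership of `z` in the box `𝔹_m(s,p) = ∏_ℓ [p ℓ, p ℓ + (s ℓ - 1)/2^m]`. -/
def memBox (m : ℕ) {d : ℕ} (s : Fin d → ℕ) (p : Fin d → ℝ) (z : Fin d → ℝ) : Prop :=
  ∀ ℓ, z ℓ ∈ Set.Icc (p ℓ) (p ℓ + ((s ℓ : ℝ) - 1) / 2 ^ m)

theorem aux_term (n j : ℕ) (hj : 2 * j ≤ n) (p x : ℝ) (hx0 : 0 ≤ x) (hx : x ≤ 1/2) (hp : x ≤ p)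
    (hp1 : p ≤ 1) : p ^ j * (1 - p) ^ (n - j) ≤ Real.exp (-(n * x)) := by
  have he : 1 - x ≤ Real.exp (-x) := by have := Real.add_one_le_exp (-x); linarith
  have key : p ^ j * (1 - p) ^ (n - j) ≤ (1 - x) ^ n := by
    obtain ⟨r, rfl⟩ := Nat.exists_eq_add_of_le hj
    have e1 : 2 * j + r - j = j + r := by omega
    rw [e1, pow_add, ← mul_assoc, ← mul_pow, pow_add, pow_mul]
    have hq : 0 ≤ 1 - p := by linarith
    have h1 : p * (1 - p) ≤ (1 - x) ^ 2 := by nlinarith [sq_nonneg (p - 1/2), sq_nonneg (x-1/2)]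
    have h0 : 0 ≤ p := hx0.trans hp
    have h1x : (0:ℝ) ≤ 1 - x := by linarith
    gcongr
  calc _ ≤ (1 - x) ^ n := key
    _ ≤ (Real.exp (-x)) ^ n := by gcongr; linarith
    _ = _ := by rw [← Real.exp_nat_mul]; ring_nf

/-- samples with at most k points in B -/
def EV {α : Type*} (G B : Finset α) (n k : ℕ) : Finset (Fin n → α) :=
  (Fintype.piFinset fun _ : Fin n => G).filter fun ω =>
      (Finset.univ.filter fun i : Fin n => ω i ∈ B).card ≤ k

theorem aux_tail {α : Type*} (G B : Finset α) (hBG : B ⊆ G) (n k : ℕ) (hkn : 2 * k < n) (x : ℝ)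
    (hx0 : 0 ≤ x) (hx : x ≤ 1/2) (hG : 0 < G.card) (hB : x * G.card ≤ B.card) :
    ((EV G B n k).card : ℝ) / (G.card : ℝ) ^ n ≤
      (k + 1) * (n.choose k) * Real.exp (-(n * x)) := by
  have hGr : (0:ℝ) < G.card := by exact_mod_cast hG
  set S : Finset (Finset (Fin n)) := (Finset.range (k+1)).biUnion fun j => Finset.powersetCard j Finset.univ
  have hsub : EV G B n k ⊆
      S.biUnion fun J => Fintype.piFinset fun i => if i ∈ J then B else G \ B := by
    intro ω hω
    simp only [EV, Finset.mem_filter, Fintype.mem_piFinset] at hω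
    simp only [Finset.mem_biUnion, S, Finset.mem_range, Finset.mem_powersetCard, Fintype.mem_piFinset]
    refine ⟨_, ⟨_, Nat.lt_succ_of_le hω.2, Finset.subset_univ _, rfl⟩, fun i => ?_⟩
    by_cases h : ω i ∈ B
    · simp [h]
    · simp [h, hω.1 i]
  have hcard : ∀ J : Finset (Fin n), ((Fintype.piFinset fun i => if i ∈ J then B else G \ B).card)
      = B.card ^ J.card * (G.card - B.card) ^ (n - J.card) := by
    intro J
    rw [Fintype.card_piFinset]
    have : ∀ i, (if i ∈ J then B else G \ B).card = if i ∈ J then B.card else (G.card - B.card) := by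
      intro i; split_ifs
      · rfl
      · exact Finset.card_sdiff_of_subset hBG
    simp only [this]
    rw [Finset.prod_ite, Finset.prod_const, Finset.prod_const]
    congr 2
    · simp
    · rw [← Finset.compl_filter, Finset.card_compl]; simp
  have hBG' := Finset.card_le_card hBG
  set p : ℝ := (B.card : ℝ) / G.card with hp
  have hp1 : p ≤ 1 := by rw [hp, div_le_one hGr]; exact_mod_cast hBG'
  have hxp : x ≤ p := by rw [hp, le_div_iff₀ hGr]; exact hB
  have hterm : ∀ J ∈ S, (((Fintype.piFinset fun i => if i ∈ J then B else G \ B).card : ℕ) : ℝ)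
      / (G.card : ℝ) ^ n ≤ Real.exp (-(n * x)) := by
    intro J hJ
    simp only [Finset.mem_biUnion, S, Finset.mem_range, Finset.mem_powersetCard] at hJ
    obtain ⟨j, hj, -, hJ⟩ := hJ
    refine le_trans (le_of_eq ?_) (aux_term n J.card (by omega) p x hx0 hx hxp hp1)
    rw [hcard]
    push_cast [hBG']
    have : (1 - p) = ((G.card : ℝ) - B.card) / G.card := by rw [hp]; field_simp
    rw [this, hp, div_pow, div_pow, div_mul_div_comm, ← pow_add]
    congr 2; omega
  have hS : (S.card : ℝ) ≤ (k + 1) * (n.choose k) := by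
    have : S.card ≤ (k+1) * n.choose k := by
      refine Finset.card_biUnion_le.trans ?_
      refine (Finset.sum_le_card_nsmul _ _ (n.choose k) ?_).trans (by simp)
      intro j hj
      rw [Finset.card_powersetCard]
      simp only [Finset.card_univ, Fintype.card_fin]
      have hj' : j ≤ k := by simpa [Nat.lt_succ_iff] using hj
      clear * - hj' hkn
      induction k, hj' using Nat.le_induction with
      | base => rfl
      | succ k hk ih => exact (ih (by omega)).trans (Nat.choose_le_succ_of_lt_half_left (by omega))
    exact_mod_cast this
  calc _ ≤ ((∑ J ∈ S, (Fintype.piFinset fun i => if i ∈ J then B else G \ B).card : ℕ) : ℝ) / (G.card : ℝ) ^ n := by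
        gcongr
        exact (Finset.card_le_card hsub).trans Finset.card_biUnion_le
    _ = ∑ J ∈ S, (((Fintype.piFinset fun i => if i ∈ J then B else G \ B).card : ℕ) : ℝ) / (G.card : ℝ) ^ n := by
        push_cast; rw [Finset.sum_div]
    _ ≤ S.card * Real.exp (-(n * x)) := by
        refine (Finset.sum_le_card_nsmul _ _ _ hterm).trans (by simp)
    _ ≤ _ := by gcongr

/-- per-coordinate index set -/
def TT (m : ℕ) : Finset (ℕ × ℕ) :=
  (Finset.range (2^m) ×ˢ Finset.range (2^m)).filter fun z => z.1 + z.2 + 2 ≤ 2^m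

/-- weight -/
def ww (m : ℕ) (z : ℕ × ℕ) : ℝ := 1 - ((z.1 + z.2 : ℕ) : ℝ) / 2^m

/-- fraction of grid points -/
def ff (m : ℕ) (z : ℕ × ℕ) : ℝ := ((2^m - 1 - z.1 - z.2 : ℝ)) / (2^m - 1)

theorem aux_ff (m : ℕ) (hm : 1 ≤ m) (z : ℕ × ℕ) (hz : z ∈ TT m) :
    0 < ww m z ∧ ww m z ≤ 1 ∧ (ww m z) ^ (1 + 4 / (m:ℝ)) ≤ ff m z := by
  simp only [TT, Finset.mem_filter] at hz
  obtain ⟨-, hz⟩ := hz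
  have hz' : (z.1 : ℝ) + z.2 + 2 ≤ 2^m := by exact_mod_cast hz
  have hN : (0:ℝ) < 2^m := by positivity
  have hz1 : (0:ℝ) ≤ z.1 := by positivity
  have hz2 : (0:ℝ) ≤ z.2 := by positivity
  have hmr : (0:ℝ) < m := by exact_mod_cast hm
  refine ⟨?_, ?_, ?_⟩
  · simp only [ww, sub_pos, div_lt_one hN]; push_cast; linarith
  · simp only [ww, sub_le_self_iff]; positivity
  rcases Nat.eq_or_lt_of_le hm with rfl | hm2
  · have : z.1 = 0 ∧ z.2 = 0 := by omega
    simp [ww, ff, this.1, this.2]; norm_num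
  have hm2r : (2:ℝ) ≤ m := by exact_mod_cast hm2
  have hN4 : (4:ℝ) ≤ 2^m := by
    calc (4:ℝ) = 2^2 := by norm_num
      _ ≤ 2^m := pow_le_pow_right₀ (by norm_num) hm2
  set N : ℝ := 2^m with hNdef
  have hconvex := (convexOn_rpow (p := 1 + 4/(m:ℝ)) (le_add_of_nonneg_right (by positivity)))
  obtain ⟨-, hconvex2⟩ := hconvex
  have hconv := hconvex2 (x := 2 / N) (Set.mem_Ici.2 (by positivity)) (y := 1) (Set.mem_Ici.2 (by norm_num))
    (a := ((z.1:ℝ) + z.2) / (N - 2)) (b := (N - 2 - (z.1:ℝ) - z.2) / (N - 2))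
    (div_nonneg (by linarith) (by linarith)) (div_nonneg (by linarith) (by linarith))
    (by rw [← add_div]; rw [div_eq_one_iff_eq (by linarith)]; ring)
  simp only [smul_eq_mul, Real.one_rpow, mul_one] at hconv
  have hN2 : N - 2 ≠ 0 := by linarith
  have hN1 : N - 1 ≠ 0 := by linarith
  have e1 : (z.1 + z.2) / (N - 2) * (2 / N) + (N - 2 - z.1 - z.2) / (N - 2) = ww m z := by
    simp only [ww]; push_cast; rw [← hNdef]; field_simp; ring
  rw [e1] at hconv
  refine hconv.trans ?_
  have hb : (2 / N) ^ (1 + 4 / (m:ℝ)) ≤ 1 / (N - 1) := by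
    have e2 : (2 / N) = (2:ℝ) ^ (1 - (m:ℝ)) := by
      rw [Real.rpow_sub (by norm_num), Real.rpow_one, Real.rpow_natCast]
    rw [e2, ← Real.rpow_mul (by norm_num)]
    have : (1 - (m:ℝ)) * (1 + 4 / m) ≤ -m := by
      have : (4:ℝ) / m ≤ 2 := by rw [div_le_iff₀ hmr]; linarith
      have h2 : (m:ℝ) * (4 / m) = 4 := by field_simp
      nlinarith
    calc _ ≤ (2:ℝ) ^ (-(m:ℝ)) := Real.rpow_le_rpow_of_exponent_le (by norm_num) this
      _ = 1 / N := by rw [Real.rpow_neg (by norm_num), Real.rpow_natCast, one_div]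
      _ ≤ _ := by apply one_div_le_one_div_of_le <;> linarith
  have hl : 0 ≤ (z.1 + z.2) / (N - 2) := div_nonneg (by linarith) (by linarith)
  calc _ ≤ (z.1 + z.2) / (N - 2) * (1 / (N - 1)) + (N - 2 - z.1 - z.2) / (N - 2) := by gcongr
    _ = ff m z := by simp only [ff]; rw [← hNdef]; field_simp; ring

theorem aux_prob (m d : ℕ) (hm : 1 ≤ m) (σ : Fin d → ℕ × ℕ) (hσ : ∀ ℓ, σ ℓ ∈ TT m)
    (hw : ((2:ℝ)^m)⁻¹ < ∏ ℓ, ww m (σ ℓ)) : 1 / 2^(m+4) ≤ ∏ ℓ, ff m (σ ℓ) := by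
  have hmr : (0:ℝ) < m := by exact_mod_cast hm
  calc (1:ℝ) / 2^(m+4) = (((2:ℝ)^m)⁻¹) ^ (1 + 4 / (m:ℝ)) := by
        rw [Real.inv_rpow (by positivity), ← Real.rpow_natCast 2 m, ← Real.rpow_mul (by norm_num),
          one_div, ← Real.rpow_natCast 2 (m+4)]
        congr 2; push_cast; field_simp
    _ ≤ (∏ ℓ, ww m (σ ℓ)) ^ (1 + 4 / (m:ℝ)) := by gcongr
    _ = ∏ ℓ, (ww m (σ ℓ)) ^ (1 + 4 / (m:ℝ)) := by
        rw [Real.finsetProd_rpow]; intro i _; exact (aux_ff m hm _ (hσ i)).1.le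
    _ ≤ _ := by
        apply Finset.prod_le_prod
        · intro i _; exact Real.rpow_nonneg (aux_ff m hm _ (hσ i)).1.le _
        · intro i _; exact (aux_ff m hm _ (hσ i)).2.2

/-- the finite family of discretised boxes -/
def BB (m d : ℕ) : Finset (Fin d → ℕ × ℕ) :=
  (Fintype.piFinset fun _ => TT m).filter fun σ => ((2:ℝ)^m)⁻¹ < ∏ ℓ, ww m (σ ℓ)

theorem aux_geom (N : ℕ) (q : ℝ) (h0 : 0 ≤ q) (h1 : q < 1) : ∑ i ∈ Finset.range N, q ^ i ≤ (1 - q)⁻¹ := by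
  rw [← tsum_geometric_of_lt_one h0 h1]
  exact (summable_geometric_of_lt_one h0 h1).sum_le_tsum _ (fun i _ => by positivity)

theorem aux_count (m d : ℕ) (hm : 1 ≤ m) (hd : 1 ≤ d) :
    ((BB m d).card : ℝ) < Real.exp (m * 2 ^ m * Real.log (2 ^ (m + 3) * d)) := by
  have hmr : (1:ℝ) ≤ m := by exact_mod_cast hm
  have hdr : (1:ℝ) ≤ d := by exact_mod_cast hd
  have hN2 : (2:ℝ) ≤ 2^m := by
    calc (2:ℝ) = 2^1 := by norm_num
      _ ≤ 2^m := pow_le_pow_right₀ (by norm_num) hm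
  set L := Real.log (2 ^ (m + 3) * d) with hL
  have hLpos : 4 * Real.log 2 ≤ L := by
    have : 4 * Real.log 2 = Real.log (2^4) := by rw [Real.log_pow]; norm_num
    rw [this, hL]
    apply Real.log_le_log (by norm_num)
    calc (2:ℝ)^4 ≤ 2^(m+3) * 1 := by rw [mul_one]; exact pow_le_pow_right₀ (by norm_num) (by omega)
      _ ≤ _ := by gcongr
  have hl1 := Real.log_two_gt_d9
  have hl2 := Real.log_two_lt_d9
  set t : ℝ := 2^m * L with ht
  have htpos : 0 ≤ t := by have : 0 ≤ L := by linarith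
                           positivity
  set q : ℝ := Real.exp (-L) with hq
  have hqv : q = (2^(m+3) * (d:ℝ))⁻¹ := by
    rw [hq, Real.exp_neg, hL, Real.exp_log (by positivity)]
  have hq0 : 0 ≤ q := by positivity
  have hqd : q * (2 * d) ≤ 1/2 := by
    rw [hqv, pow_add]; field_simp; nlinarith
  have hq1 : q < 1 := by nlinarith
  have hsum : ∑ z ∈ TT m, (ww m z) ^ t ≤ ((1 - q)⁻¹)^2 := by
    calc _ ≤ ∑ z ∈ TT m, q ^ z.1 * q ^ z.2 := by
          apply Finset.sum_le_sum
          intro z hz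
          have h := (aux_ff m hm z hz).1
          have : ww m z ≤ Real.exp (-(((z.1 + z.2 : ℕ) : ℝ) / 2^m)) := by
            have := Real.add_one_le_exp (-(((z.1 + z.2 : ℕ) : ℝ) / 2^m))
            rw [ww]; linarith
          calc _ ≤ (Real.exp (-(((z.1 + z.2 : ℕ) : ℝ) / 2^m))) ^ t := by gcongr
            _ = _ := by
              rw [← Real.exp_mul, ← pow_add, hq, ← Real.exp_nat_mul, ht]
              congr 1; field_simp
      _ ≤ ∑ z ∈ Finset.range (2^m) ×ˢ Finset.range (2^m), q ^ z.1 * q ^ z.2 := by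
          apply Finset.sum_le_sum_of_subset_of_nonneg (Finset.filter_subset _ _)
          intros; positivity
      _ = (∑ i ∈ Finset.range (2^m), q ^ i) ^ 2 := by
          rw [Finset.sum_product, sq, Finset.sum_mul_sum]
      _ ≤ _ := by
          gcongr
          exact aux_geom _ q hq0 hq1
  have hone : ∀ σ ∈ BB m d, (1:ℝ) ≤ (2^m) ^ t * ∏ ℓ, (ww m (σ ℓ)) ^ t := by
    intro σ hσ
    simp only [BB, Finset.mem_filter, Fintype.mem_piFinset] at hσ
    have hp : ∀ i ∈ Finset.univ, 0 ≤ ww m (σ i) := fun i _ => (aux_ff m hm _ (hσ.1 i)).1.le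
    rw [Real.finsetProd_rpow _ _ hp, ← Real.mul_rpow (by positivity) (Finset.prod_nonneg hp)]
    apply Real.one_le_rpow _ htpos
    have := hσ.2.le
    rw [inv_le_iff_one_le_mul₀ (by positivity)] at this
    linarith
  have hinv : ((1 - q)⁻¹^2)^d ≤ 2 := by
    rw [← pow_mul, inv_pow]
    have hb := one_add_mul_le_pow (a := -q) (by linarith) (2 * d)
    push_cast at hb
    have : (1/2 : ℝ) ≤ (1 - q)^(2*d) := by
      rw [← sub_eq_add_neg] at hb; nlinarith
    calc _ ≤ (1/2 : ℝ)⁻¹ := by gcongr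
      _ = 2 := by norm_num
  calc ((BB m d).card : ℝ) = ∑ σ ∈ BB m d, (1:ℝ) := by simp
    _ ≤ ∑ σ ∈ BB m d, (2^m) ^ t * ∏ ℓ, (ww m (σ ℓ)) ^ t := Finset.sum_le_sum hone
    _ ≤ ∑ σ ∈ Fintype.piFinset (fun _ : Fin d => TT m), (2^m) ^ t * ∏ ℓ, (ww m (σ ℓ)) ^ t := by
        apply Finset.sum_le_sum_of_subset_of_nonneg (Finset.filter_subset _ _)
        intro σ hσ _
        rw [Fintype.mem_piFinset] at hσ
        have : 0 ≤ ∏ ℓ, (ww m (σ ℓ)) ^ t :=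
          Finset.prod_nonneg fun i _ => Real.rpow_nonneg (aux_ff m hm _ (hσ i)).1.le _
        positivity
    _ = (2^m) ^ t * (∑ z ∈ TT m, (ww m z) ^ t) ^ d := by
        rw [← Finset.mul_sum]
        congr 1
        rw [Finset.sum_prod_piFinset (TT m) (fun (_ : Fin d) z => (ww m z) ^ t)]
        simp
    _ ≤ (2^m) ^ t * (((1 - q)⁻¹)^2) ^ d := by
        gcongr
        exact Finset.sum_nonneg fun z hz => Real.rpow_nonneg (aux_ff m hm _ hz).1.le _
    _ ≤ (2^m) ^ t * 2 := by gcongr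
    _ = Real.exp (Real.log 2 * (m * 2^m * L + 1)) := by
        rw [mul_add, mul_one, Real.exp_add, Real.exp_log (by norm_num), ← Real.rpow_natCast 2 m,
          ← Real.rpow_mul (by norm_num), Real.rpow_def_of_pos (by norm_num), ht, Real.rpow_natCast]
        congr 2; ring
    _ < _ := by
        apply Real.exp_lt_exp.2
        have h1 : 1 * 2 * (4 * Real.log 2) ≤ m * 2^m * L := by gcongr
        nlinarith

theorem aux_interval_s7 (m : ℕ) (I : Set ℝ) (hI : IsIntervalIn01 I)
    (hv : ((2:ℝ)^m)⁻¹ < (volume I).toReal) :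
    ∃ z ∈ TT m, (volume I).toReal ≤ ww m z ∧
      ∀ j : ℕ, z.1 < j → j < 2^m - z.2 → (j:ℝ) / 2^m ∈ I := by
  have hN : (0:ℝ) < 2^m := by positivity
  obtain ⟨h01, hoc⟩ := hI
  have hne : I.Nonempty := by
    rw [Set.nonempty_iff_ne_empty]; rintro rfl
    simp at hv; linarith
  have hbb : BddBelow I := bddBelow_Icc.mono h01
  have hba : BddAbove I := bddAbove_Icc.mono h01
  set a := sInf I with ha
  set b := sSup I with hb
  have hsub : I ⊆ Set.Icc a b := fun x hx => ⟨csInf_le hbb hx, le_csSup hba hx⟩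
  have hab : a ≤ b := by obtain ⟨x, hx⟩ := hne; exact (hsub hx).1.trans (hsub hx).2
  have ha0 : 0 ≤ a := le_csInf hne fun x hx => (h01 hx).1
  have hb1 : b ≤ 1 := csSup_le hne fun x hx => (h01 hx).2
  have hvol : (volume I).toReal ≤ b - a := by
    have := measure_mono (μ := volume) hsub
    rw [Real.volume_Icc] at this
    exact ENNReal.toReal_le_of_le_ofReal (by linarith) this
  have hin : ∀ x, a < x → x < b → x ∈ I := by
    intro x hx1 hx2
    obtain ⟨y, hy, hyx⟩ := exists_lt_of_csInf_lt hne hx1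
    obtain ⟨y', hy', hyx'⟩ := exists_lt_of_lt_csSup hne hx2
    exact hoc.out hy hy' ⟨hyx.le, hyx'.le⟩
  set p := ⌊a * 2^m⌋₊ with hp
  set r := ⌈(b - a) * 2^m⌉₊ with hr
  have hp1 : (p:ℝ) ≤ a * 2^m := Nat.floor_le (by positivity)
  have hp2 : a * 2^m < p + 1 := Nat.lt_floor_add_one _
  have hr1 : (b - a) * 2^m ≤ r := Nat.le_ceil _
  have hr2 : (r:ℝ) < (b - a) * 2^m + 1 := Nat.ceil_lt_add_one (mul_nonneg (by linarith) hN.le)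
  have hba2 : 1 < (b - a) * 2^m := by
    have : ((2:ℝ)^m)⁻¹ < b - a := by linarith
    rwa [inv_lt_iff_one_lt_mul₀ hN] at this
  have hrge : 2 ≤ r := by
    have : (1:ℝ) < r := by linarith
    exact_mod_cast this
  have hprN : p + r ≤ 2^m := by
    have : (p:ℝ) + r < 2^m + 1 := by nlinarith
    have : p + r < 2^m + 1 := by exact_mod_cast this
    omega
  refine ⟨(p, 2^m - p - r), ?_, ?_, ?_⟩
  · simp only [TT, Finset.mem_filter, Finset.mem_product, Finset.mem_range]; omega
  · refine hvol.trans ?_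
    have : p + (2^m - p - r) = 2^m - r := by omega
    simp only [ww, this]
    rw [Nat.cast_sub (by omega)]
    push_cast
    rw [sub_div, div_self hN.ne']
    rw [← le_div_iff₀ hN] at hr1
    linarith
  · intro j hj1 hj2
    dsimp only at hj1 hj2
    have hj3 : j + 1 ≤ p + r := by omega
    have hj1' : (p:ℝ) + 1 ≤ j := by exact_mod_cast hj1
    have hj3' : (j:ℝ) + 1 ≤ p + r := by exact_mod_cast hj3
    apply hin
    · rw [lt_div_iff₀ hN]; linarith
    · rw [div_lt_iff₀ hN]; linarith

/-- grid points of a discretised box -/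
def GB (m d : ℕ) (σ : Fin d → ℕ × ℕ) : Finset (Fin d → ℝ) :=
  Fintype.piFinset fun ℓ => (Finset.Ioo (σ ℓ).1 (2^m - (σ ℓ).2)).image fun j : ℕ => (j : ℝ) / 2 ^ m

theorem aux_inj (m : ℕ) : Function.Injective fun j : ℕ => (j : ℝ) / 2 ^ m := by
  intro i j h
  have hN : (2:ℝ)^m ≠ 0 := by positivity
  simpa [div_left_inj' hN] using h

theorem aux_GB_sub (m d : ℕ) (σ : Fin d → ℕ × ℕ) : GB m d σ ⊆ Ggrid m d := by
  apply Fintype.piFinset_subset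
  intro ℓ
  apply Finset.image_subset_image
  intro j hj
  simp only [Finset.mem_Ioo, Finset.mem_Icc] at *
  omega

theorem aux_Ggrid_card (m d : ℕ) : (Ggrid m d).card = (2^m - 1)^d := by
  simp [Ggrid, Fintype.card_piFinset, Mgrid, Finset.card_image_of_injective _ (aux_inj m)]

theorem aux_GB_card (m d : ℕ) (hm : 1 ≤ m) (σ : Fin d → ℕ × ℕ) (hσ : ∀ ℓ, σ ℓ ∈ TT m) :
    ((GB m d σ).card : ℝ) = (∏ ℓ, ff m (σ ℓ)) * (Ggrid m d).card := by
  have hN2 : (2:ℝ) ≤ 2^m := by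
    calc (2:ℝ) = 2^1 := by norm_num
      _ ≤ 2^m := pow_le_pow_right₀ (by norm_num) hm
  have h1 : (1:ℝ) ≤ (2:ℝ)^m := by linarith
  have : ((2^m - 1 : ℕ) : ℝ) = 2^m - 1 := by
    rw [Nat.cast_sub Nat.one_le_two_pow]; simp
  rw [aux_Ggrid_card, GB, Fintype.card_piFinset]
  push_cast [this]
  have hc : ((2:ℝ)^m - 1)^d = ∏ _ℓ : Fin d, ((2:ℝ)^m - 1) := by simp
  rw [show ((2^m - 1 : ℕ) : ℝ) = 2^m - 1 from this] at *
  rw [hc, ← Finset.prod_mul_distrib]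
  apply Finset.prod_congr rfl
  intro ℓ _
  have h := hσ ℓ
  simp only [TT, Finset.mem_filter] at h
  rw [Finset.card_image_of_injective _ (aux_inj m), Nat.card_Ioo, ff, div_mul_cancel₀ _ (by linarith),
    show 2^m - (σ ℓ).2 - (σ ℓ).1 - 1 = 2^m - ((σ ℓ).2 + (σ ℓ).1 + 1) by omega, Nat.cast_sub (by omega)]
  push_cast; ring

theorem aux_box (m d : ℕ) (I : Fin d → Set ℝ) (hI : ∀ ℓ, IsIntervalIn01 (I ℓ))
    (hv : ((2:ℝ) ^ m)⁻¹ < (volume (Set.pi Set.univ I)).toReal) :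
    ∃ σ ∈ BB m d, ∀ x ∈ GB m d σ, x ∈ Set.pi Set.univ I := by
  rw [volume_pi_pi, ENNReal.toReal_prod] at hv
  have hle : ∀ ℓ, (volume (I ℓ)).toReal ≤ 1 := by
    intro ℓ
    have := measure_mono (μ := volume) (hI ℓ).1
    rw [Real.volume_Icc] at this
    exact (ENNReal.toReal_le_of_le_ofReal (by norm_num) this).trans (by norm_num)
  have hgt : ∀ ℓ, ((2:ℝ) ^ m)⁻¹ < (volume (I ℓ)).toReal := by
    intro ℓ
    refine hv.trans_le ?_
    rw [← Finset.mul_prod_erase _ _ (Finset.mem_univ ℓ)]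
    exact mul_le_of_le_one_right ENNReal.toReal_nonneg
      (Finset.prod_le_one (fun _ _ => ENNReal.toReal_nonneg) (fun i _ => hle i))
  choose σ h1 h2 h3 using fun ℓ => aux_interval_s7 m (I ℓ) (hI ℓ) (hgt ℓ)
  refine ⟨σ, ?_, ?_⟩
  · simp only [BB, Finset.mem_filter, Fintype.mem_piFinset]
    exact ⟨h1, hv.trans_le (Finset.prod_le_prod (fun _ _ => ENNReal.toReal_nonneg) fun i _ => h2 i)⟩
  · intro x hx ℓ _
    simp only [GB, Fintype.mem_piFinset, Finset.mem_image, Finset.mem_Ioo] at hx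
    obtain ⟨j, ⟨hj1, hj2⟩, hj⟩ := hx ℓ
    rw [← hj]; exact h3 ℓ j hj1 hj2

/-- For a random multiset `𝕏 = {x¹,…,xⁿ}` of `n` points sampled independently and uniformly
from `𝕄_m^d` and every `k ∈ ℕ` with `1 ≤ k < n/2`, the probability that there exists a box
`B ∈ Ω_m` (i.e. an axis-parallel box in `[0,1]^d` of volume exceeding `2^{-m}`) with
`#(𝕏 ∩ B) ≤ k` is smaller than `(2 n^k/(k-1)!) · exp(m 2^m log(2^{m+3} d) - n 2^{-m-4})`. -/
theorem statement_7 (m d n k : ℕ) (hm : 1 ≤ m) (hd : 1 ≤ d) (hk : 1 ≤ k) (hkn : 2 * k < n) :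
    (((Fintype.piFinset fun _ : Fin n => Ggrid m d).filter fun ω =>
        ∃ I : Fin d → Set ℝ, (∀ ℓ, IsIntervalIn01 (I ℓ)) ∧
          ((2:ℝ) ^ m)⁻¹ < (volume (Set.pi Set.univ I)).toReal ∧
          (Finset.univ.filter fun i : Fin n => ω i ∈ Set.pi Set.univ I).card ≤ k).card : ℝ) /
      ((Fintype.piFinset fun _ : Fin n => Ggrid m d).card : ℝ)
    < 2 * (n : ℝ) ^ k / (Nat.factorial (k - 1)) *
        Real.exp (m * 2 ^ m * Real.log (2 ^ (m + 3) * d) - (n : ℝ) / 2 ^ (m + 4)) := by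
  have hGpos : 0 < (Ggrid m d).card := by
    rw [aux_Ggrid_card]
    have : 2^1 ≤ 2^m := Nat.pow_le_pow_right (by norm_num) hm
    exact pow_pos (by omega) _
  have hGr : (0:ℝ) < (Ggrid m d).card := by exact_mod_cast hGpos
  have hGn : ((Fintype.piFinset fun _ : Fin n => Ggrid m d).card : ℝ) = ((Ggrid m d).card : ℝ)^n := by
    rw [Fintype.card_piFinset]; simp
  rw [hGn]
  set F : (Fin d → ℕ × ℕ) → Finset (Fin n → Fin d → ℝ) := fun σ =>
    EV (Ggrid m d) (GB m d σ) n k with hF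
  have hsub : ((Fintype.piFinset fun _ : Fin n => Ggrid m d).filter fun ω =>
        ∃ I : Fin d → Set ℝ, (∀ ℓ, IsIntervalIn01 (I ℓ)) ∧
          ((2:ℝ) ^ m)⁻¹ < (volume (Set.pi Set.univ I)).toReal ∧
          (Finset.univ.filter fun i : Fin n => ω i ∈ Set.pi Set.univ I).card ≤ k) ⊆
      (BB m d).biUnion F := by
    intro ω hω
    rw [Finset.mem_filter] at hω
    obtain ⟨hω, I, hI, hv, hc⟩ := hω
    obtain ⟨σ, hσ, hx⟩ := aux_box m d I hI hv
    rw [Finset.mem_biUnion]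
    refine ⟨σ, hσ, ?_⟩
    simp only [hF, EV, Finset.mem_filter]
    refine ⟨hω, le_trans (Finset.card_le_card ?_) hc⟩
    intro i hi
    simp only [Finset.mem_filter, Finset.mem_univ, true_and] at hi ⊢
    exact hx _ hi
  set c : ℝ := (k + 1) * (n.choose k) * Real.exp (-(n * (1 / 2^(m+4)))) with hc
  have hFb : ∀ σ ∈ BB m d, ((F σ).card : ℝ) / ((Ggrid m d).card : ℝ)^n ≤ c := by
    intro σ hσ
    simp only [BB, Finset.mem_filter, Fintype.mem_piFinset] at hσ
    have hx : (1:ℝ) / 2^(m+4) ≤ 1/2 := by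
      apply one_div_le_one_div_of_le (by norm_num)
      calc (2:ℝ) = 2^1 := by norm_num
        _ ≤ _ := pow_le_pow_right₀ (by norm_num) (by omega)
    have := aux_tail (Ggrid m d) (GB m d σ) (aux_GB_sub m d σ) n k hkn (1 / 2^(m+4)) (by positivity)
      hx hGpos (by
        rw [aux_GB_card m d hm σ hσ.1]
        gcongr
        exact aux_prob m d hm σ hσ.1 hσ.2)
    exact this
  have hcpos : 0 < c := by
    have : 0 < n.choose k := Nat.choose_pos (by omega)
    positivity
  have hck : ((k:ℝ) + 1) * (n.choose k) ≤ 2 * (n:ℝ)^k / (Nat.factorial (k-1)) := by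
    obtain ⟨k, rfl⟩ := Nat.exists_eq_add_of_le' hk
    have h1 := Nat.choose_le_pow_div (α := ℝ) (k+1) n
    have h2 : ((k+1 : ℕ) : ℝ) + 1 ≤ 2 * (k + 1) := by push_cast; linarith [(Nat.cast_nonneg k : (0:ℝ) ≤ k)]
    calc _ ≤ (2 * ((k:ℝ) + 1)) * ((n:ℝ)^(k+1) / ((k+1).factorial)) := by gcongr
      _ = _ := by
        rw [Nat.factorial_succ, Nat.add_sub_cancel]; push_cast
        have : (k.factorial : ℝ) ≠ 0 := by positivity
        field_simp
  calc _ ≤ ((∑ σ ∈ BB m d, (F σ).card : ℕ) : ℝ) / ((Ggrid m d).card : ℝ)^n := by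
        gcongr
        exact (Finset.card_le_card hsub).trans Finset.card_biUnion_le
    _ = ∑ σ ∈ BB m d, ((F σ).card : ℝ) / ((Ggrid m d).card : ℝ)^n := by
        push_cast; rw [Finset.sum_div]
    _ ≤ (BB m d).card * c := (Finset.sum_le_card_nsmul _ _ _ hFb).trans (by simp)
    _ < Real.exp (m * 2 ^ m * Real.log (2 ^ (m + 3) * d)) * c := by
        gcongr
        exact aux_count m d hm hd
    _ ≤ Real.exp (m * 2 ^ m * Real.log (2 ^ (m + 3) * d)) *
        (2 * (n:ℝ)^k / (Nat.factorial (k-1)) * Real.exp (-(n * (1 / 2^(m+4))))) := by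
        rw [hc]; gcongr
    _ = _ := by
        rw [sub_eq_add_neg, Real.exp_add, mul_one_div]; ring
end
end

section
/- There exists a constant C ≤ 2⁹ such that for all m, k ∈ ℕ and d ≥ 2, the inverse of the minimal k-dispersion N(2^{−m}, d) := min{ N ∈ ℕ : k-disp*(N,d) ≤ 2^{−m} } satisfies N(2^{−m}, d) ≤ C · m · 2^m · max{ 2^m · log(2^m d) , k }. -/
open MeasureTheory Finset
open scoped Classical

noncomputable section

/-- Random choice (by counting): if every member of `T` has density at least `q`, then some
`N`-tuple of elements of `G` hits each member of `T` more than `k` times. -/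
lemma exists_good {G : Type*} [Fintype G] [Nonempty G] (T : Finset (Finset G)) (N k : ℕ) (q : ℝ)
    (hT : ∀ Q ∈ T, q * Fintype.card G ≤ Q.card)
    (hs : (T.card : ℝ) * 2 ^ k * Real.exp (-(N * (q / 2))) < 1) :
    ∃ f : Fin N → G, ∀ Q ∈ T, k < (Finset.univ.filter (fun j => f j ∈ Q)).card := by
  by_contra hcon
  push Not at hcon
  have hG : (0:ℝ) < Fintype.card G := by exact_mod_cast Fintype.card_pos
  have h1 : ∀ f : Fin N → G, (1:ℝ) ≤ ∑ Q ∈ T, 2 ^ k * ∏ j, (if f j ∈ Q then (1/2:ℝ) else 1) := by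
    intro f
    obtain ⟨Q, hQ, hc⟩ := hcon f
    refine le_trans ?_ (Finset.single_le_sum (f := fun Q => (2:ℝ) ^ k * ∏ j, (if f j ∈ Q then (1/2:ℝ) else 1)) ?_ hQ)
    · rw [Finset.prod_ite, Finset.prod_const, Finset.prod_const_one, mul_one]
      have : (1/2:ℝ)^k ≤ (1/2:ℝ) ^ (Finset.univ.filter (fun j => f j ∈ Q)).card :=
        pow_le_pow_of_le_one (by norm_num) (by norm_num) hc
      calc (1:ℝ) = 2 ^ k * (1/2)^k := by rw [← mul_pow]; norm_num
        _ ≤ _ := by gcongr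
    · intro Q _
      refine mul_nonneg (by positivity) (Finset.prod_nonneg ?_)
      intro j _
      split_ifs <;> norm_num
  have h2 : ((Fintype.card G : ℝ)) ^ N ≤ ∑ f : Fin N → G, ∑ Q ∈ T, 2 ^ k * ∏ j, (if f j ∈ Q then (1/2:ℝ) else 1) := by
    calc ((Fintype.card G : ℝ)) ^ N = ∑ f : Fin N → G, (1:ℝ) := by simp
      _ ≤ _ := Finset.sum_le_sum (fun f _ => h1 f)
  rw [Finset.sum_comm] at h2
  have h3 : ∀ Q ∈ T, ∑ f : Fin N → G, (2:ℝ) ^ k * ∏ j, (if f j ∈ Q then (1/2:ℝ) else 1)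
      ≤ 2 ^ k * ((Fintype.card G : ℝ) ^ N * Real.exp (-(N * (q / 2)))) := by
    intro Q hQ
    rw [← Finset.mul_sum, ← Fintype.sum_pow (fun g => if g ∈ Q then (1/2:ℝ) else 1) N]
    have e : ∑ g : G, (if g ∈ Q then (1/2:ℝ) else 1) = Fintype.card G - Q.card / 2 := by
      have : ∀ g : G, (if g ∈ Q then (1/2:ℝ) else 1) = 1 - (if g ∈ Q then (1/2:ℝ) else 0) := by
        intro g; split_ifs <;> norm_num
      simp_rw [this]
      rw [Finset.sum_sub_distrib]
      simp
      ring
    have e2 : ∑ g : G, (if g ∈ Q then (1/2:ℝ) else 1) ≤ Fintype.card G * Real.exp (-(q/2)) := by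
      rw [e]
      have := hT Q hQ
      have h4 := Real.add_one_le_exp (-(q/2))
      nlinarith
    have e0 : 0 ≤ ∑ g : G, (if g ∈ Q then (1/2:ℝ) else 1) :=
      Finset.sum_nonneg (fun g _ => by split_ifs <;> norm_num)
    have e3 := pow_le_pow_left₀ e0 e2 N
    rw [mul_pow, ← Real.exp_nat_mul] at e3
    rw [show -(N * (q/2)) = N * (-(q/2)) by ring]
    gcongr
  have h5 := h2.trans (Finset.sum_le_sum h3)
  rw [Finset.sum_const, nsmul_eq_mul] at h5
  have hp : (0:ℝ) < (Fintype.card G : ℝ) ^ N := by positivity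
  nlinarith

/-- The key product inequality. -/
lemma prod_shift {ι : Type*} (s : Finset ι) (l : ι → ℝ) (w : ℝ) (hw : 0 ≤ w) (hw1 : w < 1)
    (hl : ∀ i ∈ s, w ≤ l i ∧ l i ≤ 1) :
    (∏ i ∈ s, l i - w) / (1 - w) ≤ ∏ i ∈ s, ((l i - w) / (1 - w)) := by
  induction s using Finset.induction_on with
  | empty => simp; rw [div_self]; linarith
  | insert i s hi ih =>
    rw [Finset.prod_insert hi, Finset.prod_insert hi]
    have ih' := ih (fun j hj => hl j (Finset.mem_insert_of_mem hj))
    have hi' := hl i (Finset.mem_insert_self _ _)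
    have hP : ∏ i ∈ s, l i ≤ 1 := Finset.prod_le_one
      (fun j hj => hw.trans (hl j (Finset.mem_insert_of_mem hj)).1)
      (fun j hj => (hl j (Finset.mem_insert_of_mem hj)).2)
    have h1 : 0 < 1 - w := by linarith
    refine le_trans ?_ (mul_le_mul_of_nonneg_left ih' (div_nonneg (by linarith) h1.le))
    rw [div_mul_div_comm, div_le_div_iff₀ h1 (by positivity)]
    have : (l i * ∏ i ∈ s, l i - w) * (1 - w) ≤ (l i - w) * (∏ i ∈ s, l i - w) := by
      nlinarith [mul_nonneg hw (mul_nonneg (sub_nonneg.2 hi'.2) (sub_nonneg.2 hP))]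
    nlinarith

/-- Number of cells in a range. -/
lemma cells_card (n α β : ℕ) (hβ : β ≤ n + 2) :
    (β : ℝ) - 2 - α ≤ ((Finset.univ : Finset (Fin n)).filter
      (fun g : Fin n => α ≤ (g:ℕ) ∧ (g:ℕ) + 3 ≤ β)).card := by
  have : β - 2 - α ≤ ((Finset.univ : Finset (Fin n)).filter
      (fun g : Fin n => α ≤ (g:ℕ) ∧ (g:ℕ) + 3 ≤ β)).card := by
    rw [← Finset.card_map Fin.valEmbedding]
    have : Finset.Ico α (β - 2) ⊆ Finset.map Fin.valEmbedding ((Finset.univ : Finset (Fin n)).filter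
      (fun g : Fin n => α ≤ (g:ℕ) ∧ (g:ℕ) + 3 ≤ β)) := by
      intro x hx
      simp only [Finset.mem_Ico] at hx
      simp only [Finset.mem_map, Finset.mem_filter, Finset.mem_univ, true_and]
      exact ⟨⟨x, by omega⟩, ⟨by simp; omega, by simp; omega⟩, rfl⟩
    simpa using Finset.card_le_card this
  have h2 : β ≤ ((Finset.univ : Finset (Fin n)).filter
      (fun g : Fin n => α ≤ (g:ℕ) ∧ (g:ℕ) + 3 ≤ β)).card + 2 + α := by omega
  have h3 : (β:ℝ) ≤ ((Finset.univ : Finset (Fin n)).filter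
      (fun g : Fin n => α ≤ (g:ℕ) ∧ (g:ℕ) + 3 ≤ β)).card + 2 + α := by exact_mod_cast h2
  linarith

/-- The test set of a code. -/
def testSet (d n A : ℕ) (t : Fin A → Fin d × Fin (n + 3) × Fin (n + 3)) :
    Finset (Fin d → Fin n) :=
  Finset.univ.filter (fun g => ∀ s, ((t s).2.1 : ℕ) ≤ (g (t s).1 : ℕ) ∧
    (g (t s).1 : ℕ) + 3 ≤ ((t s).2.2 : ℕ))

lemma exists_cover {d A : ℕ} (hd : 0 < d) (S : Finset (Fin d)) (hS : S.card ≤ A) :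
    ∃ φ : Fin A → Fin d, ∀ i ∈ S, ∃ s, φ s = i := by
  refine ⟨fun s => if h : (s:ℕ) < S.card then (S.equivFin.symm ⟨s, h⟩ : Fin d) else ⟨0, hd⟩, ?_⟩
  intro i hi
  have hlt := (S.equivFin ⟨i, hi⟩).2
  refine ⟨⟨S.equivFin ⟨i, hi⟩, hlt.trans_le hS⟩, ?_⟩
  simp

/-- Each box of volume `> 2^{-m}` contains a dense test set. -/
lemma box_test (m d n : ℕ) (hm : 1 ≤ m) (hd : 2 ≤ d) (hn : n + 2 = 4 * 2 ^ m)
    (a b : Fin d → ℝ) (hab : ∀ i, 0 ≤ a i ∧ a i ≤ b i ∧ b i ≤ 1)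
    (hV : ((2:ℝ) ^ m)⁻¹ < ∏ i, (b i - a i)) :
    ∃ t : Fin (m * (4 * 2 ^ m)) → Fin d × Fin (n + 3) × Fin (n + 3),
      (2 / (4 * 2 ^ m : ℝ)) * Fintype.card (Fin d → Fin n) ≤ (testSet d n _ t).card ∧
      ∀ g ∈ testSet d n _ t, ∀ i, a i * (4 * 2 ^ m) < (g i : ℕ) + 1 ∧
        ((g i : ℕ) : ℝ) + 2 < b i * (4 * 2 ^ m) := by
  set L : ℝ := 4 * 2 ^ m with hL
  have hnL : (n:ℝ) + 2 = L := by rw [hL]; exact_mod_cast hn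
  have h2m : (2:ℝ) ≤ 2 ^ m := by
    calc (2:ℝ) = 2 ^ 1 := by norm_num
      _ ≤ 2 ^ m := pow_le_pow_right₀ (by norm_num) hm
  have hL8 : 8 ≤ L := by linarith
  have hL0 : 0 < L := by linarith
  have hVL : 4 / L < ∏ i, (b i - a i) := by
    convert hV using 1
    rw [hL]; field_simp
  have hl1 : ∀ i, b i - a i ≤ 1 := fun i => by linarith [hab i]
  have hl0 : ∀ i, 0 ≤ b i - a i := fun i => by linarith [hab i]
  have hlV : ∀ i, 4 / L < b i - a i := by
    intro i
    refine hVL.trans_le ?_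
    rw [← Finset.mul_prod_erase _ _ (Finset.mem_univ i)]
    refine mul_le_of_le_one_right (hl0 i) (Finset.prod_le_one (fun j _ => hl0 j) (fun j _ => hl1 j))
  set α : Fin d → ℕ := fun i => ⌊a i * L⌋₊ with hα
  set β : Fin d → ℕ := fun i => ⌈b i * L⌉₊ with hβ
  have hαle : ∀ i, (α i : ℝ) ≤ a i * L := fun i =>
    Nat.floor_le (mul_nonneg (hab i).1 hL0.le)
  have hαlt : ∀ i, a i * L < α i + 1 := fun i => Nat.lt_floor_add_one _
  have hβge : ∀ i, b i * L ≤ β i := fun i => Nat.le_ceil _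
  have hβlt : ∀ i, (β i : ℝ) < b i * L + 1 := fun i =>
    Nat.ceil_lt_add_one (mul_nonneg (by linarith [hab i]) hL0.le)
  have hβL : ∀ i, β i ≤ n + 2 := by
    intro i
    have : (β i : ℝ) < ((n + 2 + 1 : ℕ) : ℝ) := by
      push_cast
      have := hβlt i
      nlinarith [hab i]
    have := Nat.cast_lt.1 this
    omega
  have hαL : ∀ i, α i ≤ n + 2 := by
    intro i
    have : (α i : ℝ) ≤ ((n + 2 : ℕ) : ℝ) := by
      push_cast
      have := hαle i
      nlinarith [hab i]
    exact_mod_cast this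
  set S : Finset (Fin d) := Finset.univ.filter (fun i => b i - a i ≤ 1 - 1 / L) with hS
  have hScard : S.card ≤ m * (4 * 2 ^ m) := by
    have h1 : ∏ i, (b i - a i) ≤ (1 - 1 / L) ^ S.card := by
      rw [← Finset.prod_mul_prod_compl S, ← Finset.prod_const]
      refine le_trans (mul_le_of_le_one_right (Finset.prod_nonneg fun i _ => hl0 i)
        (Finset.prod_le_one (fun j _ => hl0 j) (fun j _ => hl1 j))) ?_
      exact Finset.prod_le_prod (fun i _ => hl0 i) (fun i hi => (Finset.mem_filter.1 hi).2)
    have h2 : (1 - 1 / L) ^ S.card ≤ Real.exp (-(S.card / L)) := by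
      have h3 : 1 - 1 / L ≤ Real.exp (-(1 / L)) := by
        have := Real.add_one_le_exp (-(1/L)); linarith
      have h4 : 0 ≤ 1 - 1 / L := by
        rw [sub_nonneg, div_le_one hL0]; linarith
      have := pow_le_pow_left₀ h4 h3 S.card
      rw [← Real.exp_nat_mul] at this
      rwa [show (S.card : ℝ) * -(1 / L) = -(S.card / L) by ring] at this
    have h5 : Real.exp (-(m:ℝ)) ≤ ((2:ℝ) ^ m)⁻¹ := by
      rw [Real.exp_neg]
      apply inv_anti₀ (by positivity)
      have := Real.exp_one_gt_d9
      calc (2:ℝ) ^ m ≤ (Real.exp 1) ^ m := pow_le_pow_left₀ (by norm_num) (by linarith) m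
        _ = Real.exp m := by rw [← Real.exp_nat_mul]; simp
    have h6 : Real.exp (-(m:ℝ)) < Real.exp (-(S.card / L)) := by linarith
    rw [Real.exp_lt_exp] at h6
    have h7 : (S.card : ℝ) / L < m := by linarith
    rw [div_lt_iff₀ hL0] at h7
    have h8 : (S.card : ℝ) < ((m * (4 * 2 ^ m) : ℕ) : ℝ) := by push_cast; exact h7
    exact (Nat.cast_lt.1 h8).le
  obtain ⟨φ, hφ⟩ := exists_cover (by omega : 0 < d) S hScard
  refine ⟨fun s => (φ s, ⟨α (φ s), by have := hαL (φ s); omega⟩,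
    ⟨β (φ s), by have := hβL (φ s); omega⟩), ?_, ?_⟩
  · have hsub : Fintype.piFinset (fun i => (Finset.univ : Finset (Fin n)).filter
      (fun g : Fin n => α i ≤ (g:ℕ) ∧ (g:ℕ) + 3 ≤ β i)) ⊆ testSet d n _ (fun s => (φ s, ⟨α (φ s), by have := hαL (φ s); omega⟩,
    ⟨β (φ s), by have := hβL (φ s); omega⟩)) := by
      intro g hg
      rw [Fintype.mem_piFinset] at hg
      simp only [testSet, Finset.mem_filter, Finset.mem_univ, true_and] at hg ⊢
      intro s
      exact hg (φ s)
    refine le_trans ?_ (Nat.cast_le.2 (Finset.card_le_card hsub))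
    rw [Fintype.card_piFinset]
    have hn0 : (0:ℝ) < n := by linarith
    have hw1 : 2 / L < 1 := by rw [div_lt_one hL0]; linarith
    have hw0 : 0 < 2 / L := by positivity
    have key := prod_shift Finset.univ (fun i => b i - a i) (2 / L) hw0.le hw1
      (fun i _ => ⟨by have := hlV i; have : 2 / L ≤ 4 / L := by gcongr; norm_num
                      linarith, hl1 i⟩)
    have h1 : 2 / L ≤ (∏ i, (b i - a i) - 2 / L) / (1 - 2 / L) := by
      rw [le_div_iff₀ (by linarith)]
      have : 4 / L = 2 / L + 2 / L := by ring
      nlinarith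
    have h2 : ∀ i, (n:ℝ) * ((b i - a i - 2 / L) / (1 - 2 / L)) = (b i - a i) * L - 2 := by
      intro i
      have : (n:ℝ) = L * (1 - 2 / L) := by field_simp; linarith
      rw [this]
      have h3 : 1 - 2 / L ≠ 0 := (by linarith : 0 < 1 - 2 / L).ne'
      rw [mul_assoc, mul_div_cancel₀ _ h3, mul_sub, mul_div_cancel₀ _ hL0.ne', mul_comm]
    calc 2 / L * (Fintype.card (Fin d → Fin n) : ℝ)
        ≤ (∏ i, ((b i - a i - 2 / L) / (1 - 2 / L))) * (Fintype.card (Fin d → Fin n) : ℝ) := by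
          gcongr; exact h1.trans key
      _ = ∏ i, ((b i - a i) * L - 2) := by
          simp_rw [← h2]
          rw [Finset.prod_mul_distrib]
          simp [mul_comm]
      _ ≤ _ := by
          push_cast
          refine Finset.prod_le_prod (fun i _ => ?_) (fun i _ => ?_)
          · have := hlV i
            rw [div_lt_iff₀ hL0] at this
            linarith
          · refine le_trans ?_ (cells_card n (α i) (β i) (hβL i))
            have := hαle i
            have := hβge i
            linarith
  · intro g hg i
    simp only [testSet, Finset.mem_filter, Finset.mem_univ, true_and] at hg
    have hi : α i ≤ (g i : ℕ) ∧ (g i : ℕ) + 3 ≤ β i := by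
      by_cases hiS : i ∈ S
      · obtain ⟨s, rfl⟩ := hφ i hiS
        exact hg s
      · have h1 : 1 - 1 / L < b i - a i := by
          by_contra hc
          exact hiS (Finset.mem_filter.2 ⟨Finset.mem_univ _, not_lt.1 hc⟩)
        have h2 : L - 1 < (b i - a i) * L := by
          have := mul_lt_mul_of_pos_right h1 hL0
          rwa [sub_mul, one_mul, div_mul_cancel₀ _ hL0.ne'] at this
        have h3 : (α i : ℝ) < ((1:ℕ):ℝ) := by
          have := hαle i
          push_cast
          nlinarith [hab i]
        have h4 : ((n + 1 : ℕ) : ℝ) < β i := by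
          have := hβge i
          push_cast
          nlinarith [hab i, mul_nonneg (hab i).1 hL0.le]
        have h3' := Nat.cast_lt.1 h3
        have h4' := Nat.cast_lt.1 h4
        have := (g i).2
        omega
    have c1 : (α i : ℝ) ≤ (g i : ℕ) := by exact_mod_cast hi.1
    have c2 : ((g i : ℕ) : ℝ) + 3 ≤ β i := by exact_mod_cast hi.2
    have := hαlt i
    have := hβlt i
    exact ⟨by linarith, by linarith⟩

/-- If `N` is large enough, the minimal dispersion is small. -/
lemma main_bound (m k d N : ℕ) (hm : 1 ≤ m) (hd : 2 ≤ d) (hN0 : 0 < N)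
    (hN : (k:ℝ) + (m * (4 * 2 ^ m)) * (4 * Real.log (2 ^ m * d)) < N / (4 * 2 ^ m)) :
    kdispStar d k N ≤ ((2:ℝ) ^ m)⁻¹ := by
  obtain ⟨n, hn⟩ : ∃ n, n + 2 = 4 * 2 ^ m :=
    ⟨4 * 2 ^ m - 2, by have : 1 ≤ 2 ^ m := Nat.one_le_two_pow
                       omega⟩
  set L : ℝ := 4 * 2 ^ m with hL
  have hnL : (n:ℝ) + 2 = L := by rw [hL]; exact_mod_cast hn
  have hL0 : 0 < L := by positivity
  have h2m : (2:ℝ) ≤ 2 ^ m := by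
    calc (2:ℝ) = 2 ^ 1 := by norm_num
      _ ≤ 2 ^ m := pow_le_pow_right₀ (by norm_num) hm
  have hd' : (2:ℝ) ≤ d := by exact_mod_cast hd
  have hnpos : 0 < n := by
    have : (0:ℝ) < n := by linarith
    exact_mod_cast this
  have : Nonempty (Fin n) := ⟨⟨0, hnpos⟩⟩
  set A := m * (4 * 2 ^ m) with hA
  have hAr : (A:ℝ) = m * L := by rw [hA, hL]; push_cast; ring
  set T : Finset (Finset (Fin d → Fin n)) :=
    (Finset.univ.image (testSet d n A)).filter
      (fun Q => 2 / L * (Fintype.card (Fin d → Fin n) : ℝ) ≤ Q.card) with hT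
  have hTcard : (T.card : ℝ) ≤ ((2 ^ m * d : ℝ) ^ 4) ^ A := by
    have h1 : T.card ≤ (d * ((n + 3) * (n + 3))) ^ A := by
      refine (Finset.card_filter_le _ _).trans (Finset.card_image_le.trans ?_)
      simp
    have h2 : (T.card : ℝ) ≤ (d * ((n + 3) * (n + 3)) : ℝ) ^ A := by exact_mod_cast h1
    refine h2.trans (pow_le_pow_left₀ (by positivity) ?_ A)
    have h3 : (n:ℝ) + 3 ≤ 9 / 2 * 2 ^ m := by linarith
    calc (d * ((n + 3) * (n + 3)) : ℝ) ≤ d * ((9 / 2 * 2 ^ m) * (9 / 2 * 2 ^ m)) := by gcongr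
      _ = (81 / 4) * (d * (2 ^ m) ^ 2) := by ring
      _ ≤ ((2:ℝ) ^ 2 * 2 ^ 3) * (d * (2 ^ m) ^ 2) := by gcongr; norm_num
      _ ≤ ((2 ^ m : ℝ) ^ 2 * (d:ℝ) ^ 3) * (d * (2 ^ m) ^ 2) := by gcongr
      _ = _ := by ring
  obtain ⟨f, hf⟩ := exists_good T N k (2 / L) (fun Q hQ => (Finset.mem_filter.1 hQ).2) (by
    have hx : (0:ℝ) < 2 ^ m * d := by positivity
    have e1 : ((2 ^ m * d : ℝ) ^ 4) ^ A = Real.exp (A * (4 * Real.log (2 ^ m * d))) := by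
      rw [Real.exp_nat_mul]
      congr 1
      rw [show (4:ℝ) = ((4:ℕ):ℝ) by norm_num, Real.exp_nat_mul, Real.exp_log hx]
    have e2 : (2:ℝ) ^ k ≤ Real.exp k := by
      have := Real.exp_one_gt_d9
      calc (2:ℝ) ^ k ≤ (Real.exp 1) ^ k := pow_le_pow_left₀ (by norm_num) (by linarith) k
        _ = Real.exp k := by rw [← Real.exp_nat_mul]; simp
    rw [e1] at hTcard
    calc (T.card : ℝ) * 2 ^ k * Real.exp (-(N * (2 / L / 2)))
        ≤ Real.exp (A * (4 * Real.log (2 ^ m * d))) * Real.exp k * Real.exp (-(N * (2 / L / 2))) := by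
          gcongr
      _ = Real.exp (A * (4 * Real.log (2 ^ m * d)) + k + -(N * (2 / L / 2))) := by
          rw [Real.exp_add, Real.exp_add]
      _ < 1 := by
          rw [Real.exp_lt_one_iff, hAr]
          have : (N:ℝ) * (2 / L / 2) = N / L := by field_simp
          rw [this]
          linarith)
  have hNr : (0:ℝ) < N := by exact_mod_cast hN0
  set x : Fin N → Fin d → ℝ := fun j i => (((f j i : ℕ) : ℝ) + 1 + (j : ℕ) / N) / L with hx
  have hθ : ∀ j : Fin N, (0:ℝ) ≤ ((j:ℕ):ℝ) / N ∧ ((j:ℕ):ℝ) / N < 1 := by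
    intro j
    refine ⟨by positivity, ?_⟩
    rw [div_lt_one hNr]
    exact_mod_cast j.2
  have hinj : Function.Injective x := by
    intro j j' h
    have h1 := congrFun h ⟨0, by omega⟩
    simp only [hx] at h1
    rw [div_left_inj' hL0.ne'] at h1
    field_simp at h1
    have h2 : N * ((f j ⟨0, by omega⟩ : ℕ) + 1) + (j:ℕ) = N * ((f j' ⟨0, by omega⟩ : ℕ) + 1) + (j':ℕ) := by
      have h1' : (N:ℝ) * (((f j ⟨0, by omega⟩ : ℕ) : ℝ) + 1) + ((j:ℕ):ℝ)
          = N * (((f j' ⟨0, by omega⟩ : ℕ) : ℝ) + 1) + ((j':ℕ):ℝ) := by linarith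
      exact_mod_cast h1'
    have h3 := congrArg (· % N) h2
    simp only [Nat.mul_add_mod, Nat.mod_eq_of_lt j.2, Nat.mod_eq_of_lt j'.2] at h3
    exact Fin.ext h3
  set P : Finset (Fin d → ℝ) := Finset.univ.map ⟨x, hinj⟩ with hP
  have hPk : kdisp d k P ≤ ((2:ℝ) ^ m)⁻¹ := by
    refine Real.sSup_le ?_ (by positivity)
    rintro v ⟨a, b, hab, hc, rfl⟩
    by_contra hV
    rw [not_le] at hV
    obtain ⟨t, ht1, ht2⟩ := box_test m d n hm hd hn a b hab hV
    have hQ : testSet d n A t ∈ T :=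
      Finset.mem_filter.2 ⟨Finset.mem_image_of_mem _ (Finset.mem_univ _), ht1⟩
    have h1 := hf _ hQ
    refine absurd hc (not_le.2 (h1.trans_le ?_))
    rw [← Finset.card_map ⟨x, hinj⟩]
    refine Finset.card_le_card ?_
    intro y hy
    obtain ⟨j, hj, rfl⟩ := Finset.mem_map.1 hy
    refine Finset.mem_filter.2 ⟨Finset.mem_map.2 ⟨j, Finset.mem_univ _, rfl⟩, ?_⟩
    intro i
    obtain ⟨c1, c2⟩ := ht2 (f j) (by simpa using hj) i
    have := hθ j
    change a i < (((f j i : ℕ) : ℝ) + 1 + (j : ℕ) / N) / L ∧ (((f j i : ℕ) : ℝ) + 1 + (j : ℕ) / N) / L < b i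
    rw [lt_div_iff₀ hL0, div_lt_iff₀ hL0]
    exact ⟨by linarith, by linarith⟩
  refine le_trans (csInf_le ⟨0, ?_⟩ ⟨P, ?_, ?_, rfl⟩) hPk
  · rintro v ⟨P', _, _, rfl⟩
    refine Real.sSup_nonneg ?_
    rintro v ⟨a, b, hab, _, rfl⟩
    exact Finset.prod_nonneg (fun i _ => by linarith [hab i])
  · intro y hy i
    obtain ⟨j, _, rfl⟩ := Finset.mem_map.1 hy
    have := hθ j
    have h1 : ((f j i : ℕ) : ℝ) + 1 ≤ n := by exact_mod_cast (f j i).2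
    change 0 ≤ (((f j i : ℕ) : ℝ) + 1 + (j : ℕ) / N) / L ∧ (((f j i : ℕ) : ℝ) + 1 + (j : ℕ) / N) / L ≤ 1
    refine ⟨by positivity, ?_⟩
    rw [div_le_one hL0]
    linarith
  · simp [hP]

/-- There is a constant `C ≤ 2⁹` such that for all `m, k ∈ ℕ` and `d ≥ 2`, the inverse of
the minimal `k`-dispersion `N(2^{-m},d) = min{N : k-disp*(N,d) ≤ 2^{-m}}` satisfies
`N(2^{-m},d) ≤ C · m · 2^m · max{2^m · log(2^m d), k}`. -/
theorem statement_9 :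
    ∃ C : ℝ, 0 < C ∧ C ≤ 2 ^ 9 ∧ ∀ m k d : ℕ, 1 ≤ m → 1 ≤ k → 2 ≤ d →
      ((sInf { N : ℕ | kdispStar d k N ≤ ((2:ℝ) ^ m)⁻¹ } : ℕ) : ℝ)
        ≤ C * m * 2 ^ m * max ((2:ℝ) ^ m * Real.log ((2:ℝ) ^ m * d)) (k : ℝ) := by
  refine ⟨2 ^ 9, by norm_num, le_rfl, ?_⟩
  intro m k d hm hk hd
  set M : ℝ := max ((2:ℝ) ^ m * Real.log ((2:ℝ) ^ m * d)) (k : ℝ) with hM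
  have hk' : (1:ℝ) ≤ k := by exact_mod_cast hk
  have hm' : (1:ℝ) ≤ m := by exact_mod_cast hm
  have hkM : (k:ℝ) ≤ M := le_max_right _ _
  have hlM : (2:ℝ) ^ m * Real.log ((2:ℝ) ^ m * d) ≤ M := le_max_left _ _
  have h2 : (1:ℝ) ≤ 2 ^ m := one_le_pow₀ (by norm_num)
  have hmM : M ≤ m * M := by nlinarith
  set K : ℝ := m * M with hK
  have hK1 : 1 ≤ K := by linarith
  have hX : (1:ℝ) ≤ 2 ^ m * K := by nlinarith
  have hB : (2:ℝ) ^ 9 * m * 2 ^ m * M = 512 * (2 ^ m * K) := by rw [hK]; ring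
  rw [hB]
  have hfl := Nat.lt_floor_add_one (512 * (2 ^ m * K))
  have hfl2 := Nat.floor_le (show (0:ℝ) ≤ 512 * (2 ^ m * K) by positivity)
  refine le_trans (Nat.cast_le.2 (Nat.sInf_le (m := ⌊512 * (2 ^ m * K)⌋₊) ?_)) hfl2
  refine main_bound m k d _ hm hd ?_ ?_
  · exact Nat.floor_pos.2 (by linarith)
  · rw [lt_div_iff₀ (by positivity)]
    have e : (m * (4 * 2 ^ m) : ℝ) * (4 * Real.log (2 ^ m * d)) ≤ 16 * K := by
      rw [hK]
      calc (m * (4 * 2 ^ m) : ℝ) * (4 * Real.log (2 ^ m * d))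
          = 16 * (m * ((2:ℝ) ^ m * Real.log ((2:ℝ) ^ m * d))) := by ring
        _ ≤ _ := by gcongr
    have e2 : ((k:ℝ) + (m * (4 * 2 ^ m) : ℝ) * (4 * Real.log (2 ^ m * d))) * (4 * 2 ^ m)
        ≤ (17 * K) * (4 * 2 ^ m) := by
      gcongr; linarith
    linarith
end
end

section
/- There exists a constant C > 0 such that for every ε ∈ (0, 1/4), every k ∈ ℕ, and every d ≥ 2, the inverse of the minimal k-dispersion satisfies N(ε, d) ≤ C · max{ log₂(d) · (log₂(1/ε)/ε)² , k · log₂(1/ε)/ε }. -/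
open MeasureTheory Finset
open scoped Classical

noncomputable section

theorem aux_prob_s10 {Ω ι : Type} [Fintype Ω] [Nonempty Ω] [Fintype ι] (E : ι → Finset Ω)
    (p : ℝ) (N k : ℕ) (hp1 : p ≤ 1)
    (h : (Fintype.card ι : ℝ) * (1 - p / 2) ^ N < (1 / 2 : ℝ) ^ k) :
    ∃ f : Fin N → Ω, ∀ i, p * (Fintype.card Ω : ℝ) ≤ ((E i).card : ℝ) →
      k < (Finset.univ.filter (fun j => f j ∈ E i)).card := by
  have hΩ : (0:ℝ) < Fintype.card Ω := by exact_mod_cast Fintype.card_pos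
  let G : Finset ι := Finset.univ.filter
    (fun i => p * (Fintype.card Ω : ℝ) ≤ ((E i).card : ℝ))
  let w : ι → Ω → ℝ := fun i ω => if ω ∈ E i then (1/2 : ℝ) else 1
  have hsum : ∀ i, ∑ ω, w i ω = (Fintype.card Ω : ℝ) - ((E i).card : ℝ) / 2 := by
    intro i
    have : ∀ ω, w i ω = 1 - (if ω ∈ E i then (1/2 : ℝ) else 0) := by
      intro ω; simp only [w]; split_ifs <;> norm_num
    simp_rw [this]
    rw [Finset.sum_sub_distrib, ← Finset.sum_filter]
    simp [div_eq_mul_inv]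
  have hle : ∀ i ∈ G, ∑ f : Fin N → Ω, ∏ j, w i (f j)
      ≤ (Fintype.card Ω : ℝ) ^ N * (1 - p / 2) ^ N := by
    intro i hi
    rw [← Fintype.sum_pow, hsum, ← mul_pow]
    have hi' := (Finset.mem_filter.1 hi).2
    have : ((E i).card : ℝ) ≤ Fintype.card Ω := by exact_mod_cast Finset.card_le_univ _
    gcongr
    · linarith
    · nlinarith
  have htot : ∑ f : Fin N → Ω, ∑ i ∈ G, ∏ j, w i (f j)
      < ∑ f : Fin N → Ω, (1/2 : ℝ) ^ k := by
    rw [Finset.sum_comm]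
    calc _ ≤ ∑ i ∈ G, (Fintype.card Ω : ℝ) ^ N * (1 - p / 2) ^ N := Finset.sum_le_sum hle
      _ = (G.card : ℝ) * ((Fintype.card Ω : ℝ) ^ N * (1 - p / 2) ^ N) := by simp
      _ ≤ (Fintype.card ι : ℝ) * ((Fintype.card Ω : ℝ) ^ N * (1 - p / 2) ^ N) := by
        have : (0:ℝ) ≤ 1 - p / 2 := by linarith
        have : (G.card : ℝ) ≤ Fintype.card ι := by exact_mod_cast Finset.card_le_univ _
        gcongr
      _ = (Fintype.card Ω : ℝ) ^ N * ((Fintype.card ι : ℝ) * (1 - p / 2) ^ N) := by ring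
      _ < (Fintype.card Ω : ℝ) ^ N * (1/2 : ℝ) ^ k := by gcongr
      _ = _ := by simp
  obtain ⟨f, -, hf⟩ := Finset.exists_lt_of_sum_lt htot
  refine ⟨f, fun i hi => ?_⟩
  have hiG : i ∈ G := Finset.mem_filter.2 ⟨Finset.mem_univ _, hi⟩
  have h1 : ∏ j, w i (f j) ≤ ∑ i ∈ G, ∏ j, w i (f j) := by
    apply Finset.single_le_sum (f := fun i => ∏ j, w i (f j)) _ hiG
    intro i _
    apply Finset.prod_nonneg
    intro j _
    simp only [w]; split_ifs <;> norm_num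
  have h2 : ∏ j, w i (f j) = (1/2 : ℝ) ^ (Finset.univ.filter (fun j => f j ∈ E i)).card := by
    simp only [w]
    rw [← Finset.prod_filter]
    simp
  rw [h2] at h1
  have h3 := lt_of_le_of_lt h1 hf
  exact (pow_lt_pow_iff_right_of_lt_one₀ (by norm_num) (by norm_num)).1 h3

theorem aux_cnt (q : ℕ) (t : ℝ) (ht : 0 ≤ t) :
    ((Finset.univ.filter (fun c : Fin q => (c : ℝ) + 1 < t)).card : ℝ) ≤ t := by
  have h1 : (Finset.univ.filter (fun c : Fin q => (c : ℝ) + 1 < t)).card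
      ≤ (Finset.range ⌊t⌋₊).card := by
    apply Finset.card_le_card_of_injOn (fun c : Fin q => (c : ℕ))
    · intro c hc
      have hc' := (Finset.mem_filter.1 hc).2
      have : c.1 + 1 ≤ ⌊t⌋₊ := Nat.le_floor (by push_cast; exact hc'.le)
      simp; omega
    · intro x _ y _ h
      exact Fin.ext h
  rw [Finset.card_range] at h1
  exact le_trans (by exact_mod_cast h1) (Nat.floor_le ht)

/-- admissible cells -/
def cells (q : ℕ) (a b : ℝ) : Finset (Fin q) :=
  Finset.univ.filter (fun c : Fin q => ((q : ℝ) + 2) * a ≤ (c : ℝ) + 1 ∧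
    (c : ℝ) + 2 ≤ ((q : ℝ) + 2) * b)

theorem aux_cells (q : ℕ) (a b : ℝ) (ha : 0 ≤ a) (hb : b ≤ 1) :
    (q : ℝ) - (q + 2) * (1 - (b - a)) ≤ ((cells q a b).card : ℝ) := by
  have hA := aux_cnt q ((q + 2) * a) (by positivity)
  have hB := aux_cnt q ((q + 2) * (1 - b)) (mul_nonneg (by positivity) (by linarith))
  set A := Finset.univ.filter (fun c : Fin q => (c : ℝ) + 1 < (q + 2) * a)
  set B := Finset.univ.filter (fun c : Fin q => (c : ℝ) + 1 < (q + 2) * (1 - b))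
  have hcov : (Finset.univ : Finset (Fin q)) ⊆ cells q a b ∪ (A ∪ B.image Fin.rev) := by
    intro c _
    by_contra hc
    simp only [Finset.mem_union, not_or] at hc
    obtain ⟨h1, h2, h3⟩ := hc
    apply h1
    simp only [cells, Finset.mem_filter, Finset.mem_univ, true_and]
    constructor
    · by_contra h
      exact h2 (by simp only [A, Finset.mem_filter, Finset.mem_univ, true_and]; linarith)
    · by_contra h
      apply h3
      rw [Finset.mem_image]
      refine ⟨Fin.rev c, ?_, Fin.rev_rev c⟩
      simp only [B, Finset.mem_filter, Finset.mem_univ, true_and]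
      have : ((Fin.rev c : Fin q) : ℕ) + (c.1 + 1) = q := by
        rw [Fin.val_rev]; have := c.2; omega
      have h' : (((Fin.rev c : Fin q) : ℕ) : ℝ) + ((c : ℝ) + 1) = q := by exact_mod_cast this
      linarith
  have h1 := Finset.card_le_card hcov
  have h2 := Finset.card_union_le (cells q a b) (A ∪ B.image Fin.rev)
  have h3 := Finset.card_union_le A (B.image Fin.rev)
  have h4 : (B.image Fin.rev).card ≤ B.card := Finset.card_image_le
  simp only [Finset.card_univ, Fintype.card_fin] at h1
  have h5 : (q : ℝ) ≤ (cells q a b).card + (A.card + B.card) := by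
    exact_mod_cast (by omega : q ≤ (cells q a b).card + (A.card + B.card))
  linarith

theorem aux_one_add {α : Type} (s : Finset α) (y : α → ℝ) (hy : ∀ i ∈ s, 0 ≤ y i) :
    1 + ∑ i ∈ s, y i ≤ ∏ i ∈ s, (1 + y i) := by
  induction s using Finset.induction_on with
  | empty => simp
  | insert a s ha ih =>
    rw [Finset.sum_insert ha, Finset.prod_insert ha]
    have h := ih (fun i hi => hy i (Finset.mem_insert_of_mem hi))
    have ha0 := hy a (Finset.mem_insert_self _ _)
    have hs : 0 ≤ ∑ i ∈ s, y i :=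
      Finset.sum_nonneg fun i hi => hy i (Finset.mem_insert_of_mem hi)
    nlinarith [mul_le_mul_of_nonneg_left h (by linarith : 0 ≤ 1 + y a)]

theorem aux_one_sub {α : Type} (s : Finset α) (x : α → ℝ) (h0 : ∀ i ∈ s, 0 ≤ x i)
    (h1 : ∀ i ∈ s, x i ≤ 1) :
    1 - ∑ i ∈ s, x i ≤ ∏ i ∈ s, (1 - x i) := by
  induction s using Finset.induction_on with
  | empty => simp
  | insert a s ha ih =>
    rw [Finset.sum_insert ha, Finset.prod_insert ha]
    have h := ih (fun i hi => h0 i (Finset.mem_insert_of_mem hi))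
      (fun i hi => h1 i (Finset.mem_insert_of_mem hi))
    have ha0 := h0 a (Finset.mem_insert_self _ _)
    have ha1 := h1 a (Finset.mem_insert_self _ _)
    have hs : 0 ≤ ∑ i ∈ s, x i :=
      Finset.sum_nonneg fun i hi => h0 i (Finset.mem_insert_of_mem hi)
    nlinarith [mul_le_mul_of_nonneg_left h (sub_nonneg.2 ha1)]

/-- product bound -/
theorem aux_prod (d q : ℕ) (ε : ℝ) (hε : 0 < ε) (hq : 4 / ε ≤ q) (l : Fin d → ℝ)
    (hl0 : ∀ i, 0 < l i) (hl1 : ∀ i, l i ≤ 1) (h : ε < ∏ i, l i) (n : Fin d → ℝ)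
    (hn : ∀ i, (q : ℝ) - (q + 2) * (1 - l i) ≤ n i) :
    (∀ i, 0 < n i) ∧ ε / 2 * (q : ℝ) ^ d ≤ ∏ i, n i := by
  have hq0 : (0:ℝ) < q := lt_of_lt_of_le (by positivity) hq
  let y : Fin d → ℝ := fun i => 1 / l i - 1
  have hy0 : ∀ i, 0 ≤ y i := fun i => by
    have := (one_le_div (hl0 i)).2 (hl1 i)
    simp only [y]; linarith
  have hP : 0 < ∏ i, l i := lt_trans hε h
  have hysum : ∑ i, y i ≤ 1 / ε := by
    have h1 := aux_one_add Finset.univ y (fun i _ => hy0 i)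
    have h2 : ∏ i, (1 + y i) = 1 / ∏ i, l i := by
      simp [y]
    have h3 : 1 / ∏ i, l i ≤ 1 / ε := one_div_le_one_div_of_le hε h.le
    linarith
  let x : Fin d → ℝ := fun i => 2 / q * y i
  have hx0 : ∀ i, 0 ≤ x i := fun i => mul_nonneg (by positivity) (hy0 i)
  have hxs : ∑ i, x i ≤ 1 / 2 := by
    simp only [x]
    rw [← Finset.mul_sum]
    calc 2 / (q:ℝ) * ∑ i, y i ≤ 2 / q * (1 / ε) := by gcongr
      _ ≤ 2 / (4 / ε) * (1 / ε) := by gcongr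
      _ = 1 / 2 := by field_simp; norm_num
  have hx1 : ∀ i, x i ≤ 1 / 2 := fun i =>
    le_trans (Finset.single_le_sum (fun i _ => hx0 i) (Finset.mem_univ i)) hxs
  have hn' : ∀ i, q * (l i * (1 - x i)) ≤ n i := by
    intro i
    refine le_trans (le_of_eq ?_) (hn i)
    have := (hl0 i).ne'
    simp only [x, y]
    field_simp
    ring
  have hpos : ∀ i, 0 < q * (l i * (1 - x i)) := fun i =>
    mul_pos hq0 (mul_pos (hl0 i) (by linarith [hx1 i]))
  refine ⟨fun i => lt_of_lt_of_le (hpos i) (hn' i), ?_⟩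
  have h1 := aux_one_sub Finset.univ x (fun i _ => hx0 i) (fun i _ => by linarith [hx1 i])
  calc ε / 2 * (q : ℝ) ^ d = (q:ℝ) ^ d * (ε * (1 / 2)) := by ring
    _ ≤ (q:ℝ) ^ d * ((∏ i, l i) * ∏ i, (1 - x i)) := by
      gcongr
      linarith
    _ = ∏ i, (q * (l i * (1 - x i))) := by
      rw [Finset.prod_mul_distrib, Finset.prod_mul_distrib]; simp
    _ ≤ ∏ i, n i := Finset.prod_le_prod (fun i _ => (hpos i).le) (fun i _ => hn' i)

/-- few constrained coordinates -/
theorem aux_few (d : ℕ) (m ε : ℝ) (hm : 0 < m) (hε : 0 < ε) (l : Fin d → ℝ)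
    (hl1 : ∀ i, l i ≤ 1) (hl0 : ∀ i, 0 < l i) (h : ε < ∏ i, l i) (S : Finset (Fin d))
    (hS : ∀ i ∈ S, 1 ≤ m * (1 - l i)) : (S.card : ℝ) ≤ m * Real.log (1 / ε) := by
  have h1 : ∏ i, l i ≤ Real.exp (- ∑ i, (1 - l i)) := by
    rw [← Finset.sum_neg_distrib, Real.exp_sum]
    apply Finset.prod_le_prod (fun i _ => (hl0 i).le)
    intro i _
    have := Real.add_one_le_exp (-(1 - l i))
    linarith
  have h2 : ∑ i, (1 - l i) ≤ Real.log (1 / ε) := by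
    rw [one_div, Real.log_inv]
    have := (Real.log_lt_iff_lt_exp hε).2 (lt_of_lt_of_le h h1)
    linarith
  have h3 : ∑ i ∈ S, (1 - l i) ≤ ∑ i, (1 - l i) :=
    Finset.sum_le_sum_of_subset_of_nonneg (Finset.subset_univ _)
      (fun i _ _ => by linarith [hl1 i])
  have h4 : (S.card : ℝ) ≤ ∑ i ∈ S, m * (1 - l i) := by
    have := Finset.sum_le_sum hS
    simpa using this
  rw [← Finset.mul_sum] at h4
  exact h4.trans (by gcongr; linarith)

/-- The discrete box of a list of constraints. -/
def cbox (d q A : ℕ) (T : Fin A → Fin d × Fin q × Fin q) : Finset (Fin d → Fin q) :=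
  Finset.univ.filter (fun ω => ∀ t, (T t).2.1 ≤ ω (T t).1 ∧ ω (T t).1 ≤ (T t).2.2)

theorem aux_cells_Icc (q : ℕ) (a b : ℝ) (h : (cells q a b).Nonempty) :
    ∃ lo hi : Fin q, ∀ c, c ∈ cells q a b ↔ lo ≤ c ∧ c ≤ hi := by
  refine ⟨(cells q a b).min' h, (cells q a b).max' h, fun c => ⟨fun hc =>
    ⟨Finset.min'_le _ _ hc, Finset.le_max' _ _ hc⟩, fun ⟨h1, h2⟩ => ?_⟩⟩
  have hm := (Finset.mem_filter.1 (Finset.min'_mem _ h)).2.1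
  have hM := (Finset.mem_filter.1 (Finset.max'_mem _ h)).2.2
  refine Finset.mem_filter.2 ⟨Finset.mem_univ _, ?_, ?_⟩
  · have : (((cells q a b).min' h : ℕ) : ℝ) ≤ (c : ℕ) := by exact_mod_cast h1
    linarith
  · have : ((c : ℕ) : ℝ) ≤ ((cells q a b).max' h : ℕ) := by exact_mod_cast h2
    linarith

theorem aux_encode (d q A : ℕ) (hd : 0 < d) (hq : 0 < q) (s : Fin d → Finset (Fin q))
    (hs : ∀ i, ∃ lo hi : Fin q, ∀ c, c ∈ s i ↔ lo ≤ c ∧ c ≤ hi)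
    (hA : (Finset.univ.filter (fun i => s i ≠ Finset.univ)).card ≤ A) :
    ∃ T, cbox d q A T = Fintype.piFinset s := by
  choose lo hi hlh using hs
  set S := Finset.univ.filter (fun i => s i ≠ Finset.univ) with hS
  let e := S.equivFin
  let T : Fin A → Fin d × Fin q × Fin q := fun t =>
    if h : t.1 < S.card then
      ((e.symm ⟨t.1, h⟩).1, lo (e.symm ⟨t.1, h⟩).1, hi (e.symm ⟨t.1, h⟩).1)
    else (⟨0, hd⟩, ⟨0, hq⟩, ⟨q - 1, by omega⟩)
  refine ⟨T, ?_⟩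
  ext ω
  simp only [cbox, Finset.mem_filter, Finset.mem_univ, true_and, Fintype.mem_piFinset]
  constructor
  · intro h i
    by_cases hi : i ∈ S
    · have hlt := (e ⟨i, hi⟩).2
      have := h ⟨(e ⟨i, hi⟩).1, lt_of_lt_of_le hlt hA⟩
      simp only [T, hlt, dif_pos, Fin.eta, Equiv.symm_apply_apply] at this
      exact (hlh i _).2 this
    · have : s i = Finset.univ := by
        by_contra h'
        exact hi (Finset.mem_filter.2 ⟨Finset.mem_univ _, h'⟩)
      rw [this]; exact Finset.mem_univ _
  · intro h t
    by_cases ht : t.1 < S.card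
    · simp only [T, ht, dif_pos]
      exact (hlh _ _).1 (h _)
    · simp only [T, ht, dif_neg, not_false_eq_true]
      constructor
      · exact Fin.mk_le_of_le_val (Nat.zero_le _)
      · rw [Fin.le_def]
        have := (ω ⟨0, hd⟩).2
        show (ω ⟨0, hd⟩).1 ≤ q - 1
        omega

theorem aux_exists (ε : ℝ) (hε : 0 < ε) (hε1 : ε < 1 / 4) (k d q A N : ℕ) (hd : 2 ≤ d)
    (hq : 4 / ε ≤ q) (hA : ((q : ℝ) + 2) * Real.log (1 / ε) < A + 1)
    (hN : ((d : ℝ) * (q * q)) ^ A * (1 - ε / 2 / 2) ^ N < (1 / 2 : ℝ) ^ k) :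
    kdispStar d k N ≤ ε := by
  have hq0' : (0:ℝ) < q := lt_of_lt_of_le (by positivity) hq
  have hq0 : 0 < q := by exact_mod_cast hq0'
  have : Nonempty (Fin q) := ⟨⟨0, hq0⟩⟩
  obtain ⟨f, hf⟩ := aux_prob_s10 (cbox d q A) (ε / 2) N k (by linarith)
    (by simpa using hN)
  let x : Fin N → Fin d → ℝ := fun j i =>
    ((f j i : ℝ) + 1 + ((j : ℝ) + 1) / (N + 1)) / (q + 2)
  have hm : (0:ℝ) < (q:ℝ) + 2 := by positivity
  have hθ : ∀ j : Fin N, 0 < ((j : ℝ) + 1) / (N + 1) ∧ ((j : ℝ) + 1) / (N + 1) < 1 := by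
    intro j
    have : (j : ℝ) < N := by exact_mod_cast j.2
    constructor
    · positivity
    · rw [div_lt_one (by positivity)]; linarith
  have hinj : Function.Injective x := by
    intro j j' h
    have h0 := congrFun h ⟨0, by omega⟩
    simp only [x] at h0
    rw [div_left_inj' hm.ne'] at h0
    set c := f j ⟨0, by omega⟩
    set c' := f j' ⟨0, by omega⟩
    have hc : c.1 = c'.1 := by
      have h1 : (c.1 : ℝ) < c'.1 + 1 := by linarith [(hθ j).1, (hθ j').2]
      have h2 : (c'.1 : ℝ) < c.1 + 1 := by linarith [(hθ j').1, (hθ j).2]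
      have h1' : c.1 < c'.1 + 1 := by exact_mod_cast h1
      have h2' : c'.1 < c.1 + 1 := by exact_mod_cast h2
      omega
    rw [hc] at h0
    have h3 : ((j : ℝ) + 1) / (N + 1) = ((j' : ℝ) + 1) / (N + 1) := by linarith
    rw [div_left_inj' (by positivity)] at h3
    have h4 : (j.1 : ℝ) = j'.1 := by linarith
    exact Fin.ext (by exact_mod_cast h4)
  let P : Finset (Fin d → ℝ) := Finset.univ.image x
  have hkd : kdisp d k P ≤ ε := by
    apply csSup_le
    · refine ⟨_, fun _ => 0, fun _ => 0, fun i => ⟨le_rfl, le_rfl, zero_le_one⟩, ?_, rfl⟩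
      rw [Finset.filter_false_of_mem]
      · simp
      · intro y _ h
        have := h ⟨0, by omega⟩
        simp at this
    · rintro v ⟨a, b, hab, hcard, rfl⟩
      by_contra hv
      push Not at hv
      have hl1 : ∀ i, b i - a i ≤ 1 := fun i => by linarith [(hab i).1, (hab i).2.2]
      have hl0 : ∀ i, 0 < b i - a i := by
        intro i
        rcases (sub_nonneg.2 (hab i).2.1).lt_or_eq with h | h
        · exact h
        · rw [Finset.prod_eq_zero (Finset.mem_univ i) h.symm] at hv
          linarith
      have hn := fun i => aux_cells q (a i) (b i) (hab i).1 (hab i).2.2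
      obtain ⟨hpos, hprod⟩ := aux_prod d q ε hε hq (fun i => b i - a i) hl0 hl1 hv
        (fun i => ((cells q (a i) (b i)).card : ℝ)) hn
      have hfew := aux_few d (q + 2) ε hm hε (fun i => b i - a i) hl1 hl0 hv
        (Finset.univ.filter (fun i => cells q (a i) (b i) ≠ Finset.univ)) (by
          intro i hi
          by_contra hlt
          apply (Finset.mem_filter.1 hi).2
          rw [← Finset.card_eq_iff_eq_univ, Fintype.card_fin]
          have h1 : (q : ℝ) < (cells q (a i) (b i)).card + 1 := by linarith [hn i]
          have h2 : q < (cells q (a i) (b i)).card + 1 := by exact_mod_cast h1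
          have h3 := Finset.card_le_univ (cells q (a i) (b i))
          rw [Fintype.card_fin] at h3
          omega)
      obtain ⟨T, hT⟩ := aux_encode d q A (by omega) hq0 (fun i => cells q (a i) (b i))
        (fun i => aux_cells_Icc _ _ _ (Finset.card_pos.1 (by exact_mod_cast hpos i)))
        (by
          have := lt_of_le_of_lt hfew hA
          exact Nat.lt_succ_iff.1 (by exact_mod_cast this))
      have hk := hf T (by
        rw [hT, Fintype.card_piFinset]
        simpa using hprod)
      apply absurd hcard
      push Not
      refine lt_of_lt_of_le hk ?_
      apply Finset.card_le_card_of_injOn x _ hinj.injOn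
      intro j hj
      have hj' : f j ∈ cbox d q A T := by
        simpa only [Finset.coe_filter, Finset.mem_univ, true_and, Set.mem_ofPred_eq] using hj
      rw [hT, Fintype.mem_piFinset] at hj'
      refine Finset.mem_coe.2 (Finset.mem_filter.2
        ⟨Finset.mem_image_of_mem _ (Finset.mem_univ _), fun i => ?_⟩)
      obtain ⟨h1, h2⟩ := (Finset.mem_filter.1 (hj' i)).2
      simp only [x]
      refine ⟨(lt_div_iff₀ hm).2 ?_, (div_lt_iff₀ hm).2 ?_⟩
      · linarith [(hθ j).1]
      · linarith [(hθ j).2]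
  refine le_trans (csInf_le ?_ ⟨P, ?_, ?_, rfl⟩) hkd
  · refine ⟨0, ?_⟩
    rintro v ⟨Q, -, -, rfl⟩
    apply Real.sSup_nonneg
    rintro w ⟨a, b, hab, -, rfl⟩
    exact Finset.prod_nonneg fun i _ => sub_nonneg.2 (hab i).2.1
  · intro y hy i
    obtain ⟨j, -, rfl⟩ := Finset.mem_image.1 hy
    have hc : ((f j i : ℕ) : ℝ) + 1 ≤ q := by exact_mod_cast (f j i).2
    refine ⟨?_, ?_⟩
    · simp only [x]; have := (hθ j).1; positivity
    · simp only [x]; rw [div_le_one hm]; linarith [(hθ j).2]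
  · rw [Finset.card_image_of_injective _ hinj]; simp

set_option maxHeartbeats 1000000 in
/-- There is a constant `C > 0` such that for every `ε ∈ (0,1/4)`, every `k ∈ ℕ` and every
`d ≥ 2`, the inverse of the minimal `k`-dispersion `N(ε,d) = min{N : k-disp*(N,d) ≤ ε}`
satisfies `N(ε,d) ≤ C · max{ log₂(d) · (log₂(1/ε)/ε)², k · log₂(1/ε)/ε }`. -/
theorem statement_10 :
    ∃ C : ℝ, 0 < C ∧ ∀ ε : ℝ, 0 < ε → ε < 1 / 4 → ∀ k d : ℕ, 1 ≤ k → 2 ≤ d →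
      ((sInf { N : ℕ | kdispStar d k N ≤ ε } : ℕ) : ℝ)
        ≤ C * max (Real.logb 2 d * (Real.logb 2 (1 / ε) / ε) ^ 2)
            ((k : ℝ) * Real.logb 2 (1 / ε) / ε) := by
  refine ⟨200, by norm_num, ?_⟩
  intro ε hε hε1 k d hk hd
  set q : ℕ := ⌈4 / ε⌉₊ with hqdef
  set R : ℝ := Real.log (1 / ε) with hR
  set L : ℝ := Real.logb 2 (1 / ε) with hL
  set D : ℝ := Real.logb 2 d with hD
  have hinv : 4 < 1 / ε := by rw [lt_div_iff₀ hε]; linarith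
  have hl2 : 0 < Real.log 2 := Real.log_pos (by norm_num)
  have hl2' : Real.log 2 ≤ 1 := by have := Real.log_two_lt_d9; linarith
  have hR0 : 0 < R := Real.log_pos (by linarith)
  have hRL : R ≤ L := by
    rw [hL, Real.logb, le_div_iff₀ hl2]; nlinarith
  have hL2 : 2 ≤ L := by
    rw [hL, Real.le_logb_iff_rpow_le (by norm_num) (by positivity)]
    norm_num; rw [one_div] at hinv; linarith
  have hd2 : (2:ℝ) ≤ d := by exact_mod_cast hd
  have hD1 : 1 ≤ D := by
    rw [hD, Real.le_logb_iff_rpow_le (by norm_num) (by linarith)]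
    simpa using hd2
  have hlogd : Real.log d ≤ D := by
    rw [hD, Real.logb, le_div_iff₀ hl2]
    nlinarith [Real.log_nonneg (by linarith : (1:ℝ) ≤ d)]
  have hq : 4 / ε ≤ q := Nat.le_ceil _
  have hq5 : (q : ℝ) + 2 ≤ 5 * (1 / ε) := by
    have h1 : (q : ℝ) < 4 / ε + 1 := Nat.ceil_lt_add_one (by positivity)
    have h2 : 4 / ε = 4 * (1 / ε) := by ring
    linarith
  have hq0 : (0:ℝ) < q := lt_of_lt_of_le (by positivity) hq
  have hlogq : Real.log q ≤ 3 * R := by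
    have h1 : (q : ℝ) ≤ (1 / ε) ^ 3 := by nlinarith [sq_nonneg (1 / ε)]
    have h2 := Real.log_le_log hq0 h1
    rw [Real.log_pow] at h2
    exact_mod_cast h2
  set A : ℕ := ⌊((q : ℝ) + 2) * R⌋₊ with hAdef
  have hA1 : ((q : ℝ) + 2) * R < A + 1 := Nat.lt_floor_add_one _
  have hA2 : (A : ℝ) ≤ 5 * (1 / ε) * L := by
    have h1 : (A : ℝ) ≤ ((q : ℝ) + 2) * R := Nat.floor_le (by positivity)
    exact h1.trans (by gcongr)
  set W : ℝ := Real.log (d * (q * q)) with hW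
  have hW2 : W ≤ 7 * (D * L) := by
    rw [hW, Real.log_mul (by positivity) (by positivity), Real.log_mul hq0.ne' hq0.ne']
    nlinarith [mul_nonneg (sub_nonneg.2 hD1) (by linarith : 0 ≤ L)]
  have hAW : A * W ≤ 35 * (D * L ^ 2 * (1 / ε)) := by
    calc A * W ≤ A * (7 * (D * L)) := by gcongr
      _ ≤ (5 * (1 / ε) * L) * (7 * (D * L)) := by gcongr
      _ = _ := by ring
  have hX0 : 0 ≤ 35 * (D * L ^ 2 * (1 / ε)) := by positivity
  set Z : ℝ := 4 / ε * (35 * (D * L ^ 2 * (1 / ε)) + k) with hZ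
  have hZ0 : 0 ≤ Z := by positivity
  set N : ℕ := ⌊Z⌋₊ + 1 with hN
  have hN1 : Z < N := by rw [hN]; push_cast; exact Nat.lt_floor_add_one _
  have hN2 : (N : ℝ) ≤ Z + 1 := by
    rw [hN]; push_cast; linarith [Nat.floor_le hZ0]
  have hmem : kdispStar d k N ≤ ε := by
    apply aux_exists ε hε hε1 k d q A N hd hq hA1
    have hbase : (0:ℝ) < d * (q * q) := by positivity
    have e1 : ((d : ℝ) * (q * q)) ^ A = Real.exp (A * W) := by
      rw [Real.exp_nat_mul, hW, Real.exp_log hbase]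
    have e2 : (1 - ε / 2 / 2) ^ N ≤ Real.exp (N * (-(ε / 4))) := by
      rw [Real.exp_nat_mul]
      have := Real.add_one_le_exp (-(ε / 4))
      apply pow_le_pow_left₀ <;> linarith
    have e3 : Real.exp (-(k * Real.log 2)) = (1 / 2 : ℝ) ^ k := by
      rw [Real.exp_neg, Real.exp_nat_mul, Real.exp_log (by norm_num)]; simp
    rw [e1, ← e3]
    refine lt_of_le_of_lt (mul_le_mul_of_nonneg_left e2 (Real.exp_pos _).le) ?_
    rw [← Real.exp_add, Real.exp_lt_exp]
    have h1 : 35 * (D * L ^ 2 * (1 / ε)) + k < N * (ε / 4) := by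
      have h2 := mul_lt_mul_of_pos_right hN1 (by positivity : 0 < ε / 4)
      have h3 : Z * (ε / 4) = 35 * (D * L ^ 2 * (1 / ε)) + k := by
        rw [hZ]; field_simp
      linarith
    have h4 : (k:ℝ) * Real.log 2 ≤ k := by
      have : (0:ℝ) ≤ k := by positivity
      nlinarith
    linarith
  have hfin : ((sInf { N : ℕ | kdispStar d k N ≤ ε } : ℕ) : ℝ) ≤ N := by
    exact_mod_cast Nat.sInf_le hmem
  refine hfin.trans (hN2.trans ?_)
  have hm1 := le_max_left (D * (L / ε) ^ 2) ((k : ℝ) * L / ε)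
  have hm2 := le_max_right (D * (L / ε) ^ 2) ((k : ℝ) * L / ε)
  set M := max (D * (L / ε) ^ 2) ((k : ℝ) * L / ε)
  have hZe : Z = 140 * (D * (L / ε) ^ 2) + 4 * (k / ε) := by
    rw [hZ]; field_simp; ring
  have hk2 : (k : ℝ) / ε ≤ k * L / ε := by
    gcongr
    have : (0:ℝ) ≤ k := by positivity
    nlinarith
  have hone : 1 ≤ D * (L / ε) ^ 2 := by
    have h1 : 1 ≤ L / ε := by rw [le_div_iff₀ hε]; linarith
    have h2 : 1 ≤ (L / ε) ^ 2 := one_le_pow₀ h1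
    exact one_le_mul_of_one_le_of_one_le hD1 h2
  linarith
end
end
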